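/- arXiv:2110.10146 — 3 statements merged into one kernel-verified Lean document; each statement's English description precedes it below -/
import Mathlib

section
/- There exists a unique real number t ≥ 0 such that ∫₁^∞ P(s) e^{(1−s)t} ds = 1; moreover this unique t satisfies 0.8035 < t < 0.8036. -/
open MeasureTheory Real

/-- The prime zeta function `P(s) = ∑_p p^{-s}` (sum over all primes). -/
noncomputable def primeZeta (s : ℝ) : ℝ := ∑' p : Nat.Primes, (p.1 : ℝ) ^ (-s)

/-- The set of `k`-almost primes: positive integers with exactly `k` prime
factors counted with multiplicity. -/
def almostPrimes (k : ℕ) : Set ℕ := {n | 0 < n ∧ n.primeFactorsList.length = k}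

/-- `P_k(s) = ∑_{n ∈ N_k} n^{-s}`; note `P_0(s) = 1` since `N_0 = {1}`. -/
noncomputable def Pk (k : ℕ) (s : ℝ) : ℝ := ∑' n : almostPrimes k, (n.1 : ℝ) ^ (-s)

/-- Translated sum `f(A, h) = ∑_{a ∈ A} 1/(a (log a + h))`. -/
noncomputable def transSum (A : Set ℕ) (h : ℝ) : ℝ :=
  ∑' a : A, 1 / ((a.1 : ℝ) * (Real.log a.1 + h))

/-!
Integrating the prime zeta series termwise turns the integral into the translated sum
`f(t) = ∑ 1 / (p (log p + t))` over the primes, which is continuous and strictly decreasing for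
`t > -log 2`. It therefore suffices to check that `f(0.8035) > 1 > f(0.8036)`.

The series converges far too slowly for this, so only the primes `p < 128` are summed directly. For
the others, write `1 / (p (log p + t)) = ∫₀^∞ p ^ (-(1 + v)) exp (-t v) dv`. Gauss rules bound the
integral of an exponential from below and Simpson rules bound it from above; applied to each term,
they bound the tail of `f` by finitely many values of `∑_{p ≥ 128} p ^ (-(1 + v))`. Since
`artanh x = x + O(x ^ 3)`, these values are, up to a relative error of about `128 ^ (-2) / 3`, those
of `∑_{p ≥ 128} artanh (p ^ (-s)) = 1 / 2 log ∏_{p ≥ 128} (1 + p ^ (-s)) / (1 - p ^ (-s))`, and the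
product is `ζ(s) ^ 2 / ζ(2 s)` with the Euler factors at `p < 128` removed. The zeta values are
computed by comparing sums with integrals of convex functions, in fixed-point interval arithmetic.
-/

section TransSum

variable {A : Set ℕ} {s t : ℝ}

lemma log_add_pos {a : ℕ} (ha : 2 ≤ a) (ht : -log 2 < t) : 0 < log a + t := by
  have : log 2 ≤ log a := log_le_log two_pos (by exact_mod_cast ha)
  linarith

lemma log_le_mul_log_add {a : ℕ} (ha : 2 ≤ a) (ht : -log 2 < t) :
    log a ≤ (log 2 + |t|) / (log 2 + t) * (log a + t) := by
  have h2 : log 2 ≤ log a := log_le_log two_pos (by exact_mod_cast ha)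
  rw [div_mul_eq_mul_div, le_div_iff₀ (by linarith)]
  rcases abs_cases t with ⟨h, _⟩ | ⟨h, _⟩ <;> rw [h] <;> nlinarith [log_pos one_lt_two]

lemma summable_one_div_mul_log_add (hA : ∀ a ∈ A, 2 ≤ a)
    (hsum : Summable fun a : A ↦ 1 / ((a.1 : ℝ) * log a.1)) (ht : -log 2 < t) :
    Summable fun a : A ↦ 1 / ((a.1 : ℝ) * (log a.1 + t)) := by
  refine (hsum.mul_left ((log 2 + |t|) / (log 2 + t))).of_nonneg_of_le (fun a ↦ ?_) fun a ↦ ?_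
  · have := log_add_pos (hA a a.2) ht
    positivity
  · have ha : (0 : ℝ) < a.1 := by exact_mod_cast two_pos.trans_le (hA a a.2)
    have hlog := log_add_pos (hA a a.2) (neg_lt_zero.2 (log_pos one_lt_two))
    have hle := log_le_mul_log_add (hA a a.2) ht
    rw [mul_one_div, div_le_div_iff₀ (mul_pos ha (log_add_pos (hA a a.2) ht))
      (mul_pos ha (by simpa using hlog))]
    nlinarith

lemma transSum_strictAntiOn (hne : A.Nonempty) (hA : ∀ a ∈ A, 2 ≤ a)
    (hsum : Summable fun a : A ↦ 1 / ((a.1 : ℝ) * log a.1)) :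
    StrictAntiOn (transSum A) (Set.Ioi (-log 2)) := by
  intro s hs t ht hst
  have hlt (a : A) :
      1 / ((a.1 : ℝ) * (log a.1 + t)) < 1 / ((a.1 : ℝ) * (log a.1 + s)) := by
    have ha : (0 : ℝ) < a.1 := by exact_mod_cast two_pos.trans_le (hA a a.2)
    have := log_add_pos (hA a a.2) hs
    gcongr
  obtain ⟨a, ha⟩ := hne
  exact Summable.tsum_lt_tsum (fun a ↦ (hlt a).le) (hlt ⟨a, ha⟩)
    (summable_one_div_mul_log_add hA hsum ht) (summable_one_div_mul_log_add hA hsum hs)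

lemma continuousOn_transSum (hA : ∀ a ∈ A, 2 ≤ a)
    (hsum : Summable fun a : A ↦ 1 / ((a.1 : ℝ) * log a.1)) (hs : -log 2 < s) :
    ContinuousOn (transSum A) (Set.Ici s) := by
  have hpos (a : A) {t : ℝ} (ht : t ∈ Set.Ici s) : 0 < (a.1 : ℝ) * (log a.1 + t) :=
    mul_pos (by exact_mod_cast two_pos.trans_le (hA a a.2))
      (log_add_pos (hA a a.2) (hs.trans_le ht))
  refine continuousOn_tsum (fun a ↦ ?_) (summable_one_div_mul_log_add hA hsum hs)
    fun a t ht ↦ ?_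
  · exact continuousOn_const.div (by fun_prop) fun t ht ↦ (hpos a ht).ne'
  · have hst : s ≤ t := ht
    rw [norm_of_nonneg (one_div_nonneg.2 (hpos a ht).le)]
    exact one_div_le_one_div_of_le (hpos a Set.self_mem_Ici) (by gcongr)

lemma rpow_neg_mul_exp_eq {a : ℕ} (ha : a ≠ 0) (s t : ℝ) :
    (a : ℝ) ^ (-s) * exp ((1 - s) * t) = exp t * exp (-(log a + t) * s) := by
  rw [rpow_def_of_pos (by positivity), ← exp_add, ← exp_add]
  ring_nf

lemma integral_rpow_neg_mul_exp {a : ℕ} (ha : 2 ≤ a) (ht : -log 2 < t) :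
    ∫ s in Set.Ioi (1 : ℝ), (a : ℝ) ^ (-s) * exp ((1 - s) * t) = 1 / (a * (log a + t)) := by
  have ha0 : a ≠ 0 := by lia
  simp only [rpow_neg_mul_exp_eq ha0]
  rw [integral_const_mul, integral_exp_mul_Ioi (neg_lt_zero.2 (log_add_pos ha ht)), neg_div_neg_eq,
    ← mul_div_assoc, ← exp_add, show t + -(log a + t) * 1 = -log a by ring, exp_neg,
    exp_log (by positivity), one_div, mul_inv, div_eq_mul_inv]

lemma integrableOn_rpow_neg_mul_exp {a : ℕ} (ha : 2 ≤ a) (ht : -log 2 < t) :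
    IntegrableOn (fun s : ℝ ↦ (a : ℝ) ^ (-s) * exp ((1 - s) * t)) (Set.Ioi 1) := by
  have ha0 : a ≠ 0 := by lia
  simp only [rpow_neg_mul_exp_eq ha0]
  exact (integrableOn_exp_mul_Ioi (neg_lt_zero.2 (log_add_pos ha ht)) 1).const_mul _

theorem integral_tsum_rpow_neg_mul_exp (hA : ∀ a ∈ A, 2 ≤ a)
    (hsum : Summable fun a : A ↦ 1 / ((a.1 : ℝ) * log a.1)) (ht : -log 2 < t) :
    ∫ s in Set.Ioi (1 : ℝ), (∑' a : A, (a.1 : ℝ) ^ (-s)) * exp ((1 - s) * t) = transSum A t := by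
  have hnorm (a : A) : ∫ s in Set.Ioi (1 : ℝ), ‖(a.1 : ℝ) ^ (-s) * exp ((1 - s) * t)‖
      = 1 / ((a.1 : ℝ) * (log a.1 + t)) := by
    rw [← integral_rpow_neg_mul_exp (hA a a.2) ht]
    exact integral_congr_ae (.of_forall fun s ↦ norm_of_nonneg (by positivity))
  have hswap := hasSum_integral_of_summable_integral_norm
    (fun a : A ↦ integrableOn_rpow_neg_mul_exp (hA a a.2) ht)
    (by simpa only [hnorm] using summable_one_div_mul_log_add hA hsum ht)
  simp only [integral_rpow_neg_mul_exp (hA _ (Subtype.prop _)) ht] at hswap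
  simpa only [tsum_mul_right, transSum] using hswap.tsum_eq.symm

end TransSum

section HermiteHadamard

variable {f : ℝ → ℝ} {a b : ℝ}

lemma intervalIntegrable_reflect (hf : ContinuousOn f (Set.Icc a b)) (hab : a ≤ b) :
    IntervalIntegrable (fun x ↦ f (a + b - x)) volume a b := by
  simpa using ((hf.intervalIntegrable_of_Icc hab).comp_sub_left (a + b)).symm

lemma two_mul_integral_eq_integral_add_reflect (hf : ContinuousOn f (Set.Icc a b)) (hab : a ≤ b) :
    2 * ∫ x in a..b, f x = ∫ x in a..b, (f x + f (a + b - x)) := by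
  rw [intervalIntegral.integral_add (hf.intervalIntegrable_of_Icc hab)
    (intervalIntegrable_reflect hf hab), intervalIntegral.integral_comp_sub_left]
  simp [two_mul]

lemma mul_midpoint_le_integral_of_convexOn (hf : ContinuousOn f (Set.Icc a b))
    (hconv : ConvexOn ℝ (Set.Icc a b) f) (hab : a ≤ b) :
    (b - a) * f ((a + b) / 2) ≤ ∫ x in a..b, f x := by
  have hpt : ∀ x ∈ Set.Icc a b, 2 * f ((a + b) / 2) ≤ f x + f (a + b - x) := by
    intro x hx
    have hx' : a + b - x ∈ Set.Icc a b := ⟨by linarith [hx.2], by linarith [hx.1]⟩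
    have := hconv.2 hx hx' one_half_pos.le one_half_pos.le (add_halves 1)
    simp only [smul_eq_mul] at this
    rw [show 1 / 2 * x + 1 / 2 * (a + b - x) = (a + b) / 2 by ring] at this
    linarith
  have hmono := intervalIntegral.integral_mono_on hab intervalIntegrable_const
    ((hf.intervalIntegrable_of_Icc hab).add (intervalIntegrable_reflect hf hab)) hpt
  rw [← two_mul_integral_eq_integral_add_reflect hf hab, intervalIntegral.integral_const,
    smul_eq_mul] at hmono
  linarith

lemma integral_le_trapezoid_of_convexOn (hf : ContinuousOn f (Set.Icc a b))
    (hconv : ConvexOn ℝ (Set.Icc a b) f) (hab : a ≤ b) :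
    ∫ x in a..b, f x ≤ (b - a) * ((f a + f b) / 2) := by
  have hpt : ∀ x ∈ Set.Icc a b, f x + f (a + b - x) ≤ f a + f b := by
    intro x hx
    have ha : a ∈ Set.Icc a b := Set.left_mem_Icc.2 hab
    have hb : b ∈ Set.Icc a b := Set.right_mem_Icc.2 hab
    obtain ⟨v, w, hv, hw, hvw, rfl⟩ := (segment_eq_Icc hab).symm ▸ hx
    have h1 := hconv.2 ha hb hv hw hvw
    have h2 := hconv.2 hb ha hv hw hvw
    simp only [smul_eq_mul] at h1 h2 ⊢
    rw [show a + b - (v * a + w * b) = v * b + w * a by linear_combination -(a + b) * hvw]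
    linear_combination h1 + h2 + (f a + f b) * hvw
  have hmono := intervalIntegral.integral_mono_on hab
    ((hf.intervalIntegrable_of_Icc hab).add (intervalIntegrable_reflect hf hab))
    intervalIntegrable_const hpt
  rw [← two_mul_integral_eq_integral_add_reflect hf hab, intervalIntegral.integral_const,
    smul_eq_mul] at hmono
  linarith

end HermiteHadamard

section RealZeta

variable {s : ℝ}

lemma convexOn_rpow_neg (hs : 0 ≤ s) : ConvexOn ℝ (Set.Ioi 0) fun x : ℝ ↦ x ^ (-s) := by
  refine ⟨convex_Ioi 0, fun x hx y hy v w hv hw hvw ↦ ?_⟩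
  have hlog := strictConcaveOn_log_Ioi.concaveOn.2 hx hy hv hw hvw
  have hexp := convexOn_exp.2 (Set.mem_univ (log x * -s)) (Set.mem_univ (log y * -s)) hv hw hvw
  have hmem : 0 < v • x + w • y := convex_Ioi 0 hx hy hv hw hvw
  simp only [smul_eq_mul] at hlog hexp hmem ⊢
  rw [rpow_def_of_pos hx, rpow_def_of_pos hy, rpow_def_of_pos hmem]
  exact (exp_le_exp.2 (by linarith [mul_le_mul_of_nonneg_right hlog hs])).trans hexp

lemma integral_rpow_neg {a b : ℝ} (ha : 0 < a) (hab : a ≤ b) (hs : s ≠ 1) :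
    ∫ x in a..b, x ^ (-s) = a ^ (1 - s) / (s - 1) - b ^ (1 - s) / (s - 1) := by
  have h0 : (0 : ℝ) ∉ Set.uIcc a b := by
    rw [Set.uIcc_of_le hab]
    exact fun h ↦ ha.not_ge h.1
  rw [integral_rpow (.inr ⟨by simpa [neg_inj] using hs, h0⟩), show -s + 1 = 1 - s by ring,
    ← neg_div_neg_eq, neg_sub, neg_sub, sub_div]

lemma rpow_neg_le_sub {x : ℝ} (hx : 1 / 2 < x) (hs : 1 < s) :
    x ^ (-s) ≤ (x - 1 / 2) ^ (1 - s) / (s - 1) - (x + 1 / 2) ^ (1 - s) / (s - 1) := by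
  have hsub : Set.Icc (x - 1 / 2) (x + 1 / 2) ⊆ Set.Ioi 0 := fun y hy ↦ by
    simp only [Set.mem_Ioi]; linarith [hy.1]
  have hmid := mul_midpoint_le_integral_of_convexOn
    (fun y hy ↦ (continuousAt_rpow_const y (-s) (.inl (hsub hy).ne')).continuousWithinAt)
    ((convexOn_rpow_neg (by linarith : 0 ≤ s)).subset hsub (convex_Icc _ _)) (by linarith)
  rw [integral_rpow_neg (by linarith) (by linarith) hs.ne'] at hmid
  ring_nf at hmid ⊢
  exact hmid

lemma sub_le_rpow_neg_add_rpow_neg {x : ℝ} (hx : 0 < x) (hs : 1 < s) :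
    x ^ (1 - s) / (s - 1) - (x + 1) ^ (1 - s) / (s - 1) ≤ (x ^ (-s) + (x + 1) ^ (-s)) / 2 := by
  have hsub : Set.Icc x (x + 1) ⊆ Set.Ioi 0 := fun y hy ↦ hx.trans_le hy.1
  have htrap := integral_le_trapezoid_of_convexOn
    (fun y hy ↦ (continuousAt_rpow_const y (-s) (.inl (hsub hy).ne')).continuousWithinAt)
    ((convexOn_rpow_neg (by linarith : 0 ≤ s)).subset hsub (convex_Icc _ _)) (by linarith)
  rwa [integral_rpow_neg hx (by linarith) hs.ne', add_sub_cancel_left, one_mul] at htrap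

lemma hasSum_sub_rpow {x : ℝ} (hx : 0 < x) (hs : 1 < s) :
    HasSum (fun n : ℕ ↦ (x + n) ^ (1 - s) / (s - 1) - (x + n + 1) ^ (1 - s) / (s - 1))
      (x ^ (1 - s) / (s - 1)) := by
  have hanti (n : ℕ) : (x + n + 1) ^ (1 - s) / (s - 1) ≤ (x + n) ^ (1 - s) / (s - 1) :=
    div_le_div_of_nonneg_right
      (rpow_le_rpow_of_nonpos (by positivity) (by linarith) (by linarith)) (by linarith)
  have htop : Filter.Tendsto (fun n : ℕ ↦ x + n) .atTop .atTop :=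
    Filter.tendsto_atTop_add_const_left _ x tendsto_natCast_atTop_atTop
  have hlim := ((tendsto_rpow_neg_atTop (sub_pos.2 hs)).comp htop).div_const (s - 1)
  rw [hasSum_iff_tendsto_nat_of_nonneg fun n ↦ sub_nonneg.2 (hanti n)]
  simp only [Function.comp_def, neg_sub, zero_div] at hlim
  convert hlim.const_sub (x ^ (1 - s) / (s - 1)) using 2 with n
  · simpa [add_assoc] using
      Finset.sum_range_sub' (fun n : ℕ ↦ (x + n) ^ (1 - s) / (s - 1)) n
  · ring

/-- The value `ζ(s) = ∑ n ^ (-s)` of the Riemann zeta function at a real `s > 1`; the term `n = 0`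
is the junk value `0 ^ (-s) = 0`. -/
noncomputable def realZeta (s : ℝ) : ℝ := ∑' n : ℕ, (n : ℝ) ^ (-s)

lemma realZeta_eq_sum_add_tsum (hs : 1 < s) (M : ℕ) :
    realZeta s = ∑ n ∈ Finset.range M, (n : ℝ) ^ (-s) + ∑' n : ℕ, ((M : ℝ) + n) ^ (-s) := by
  have hsum : Summable fun n : ℕ ↦ (n : ℝ) ^ (-s) := summable_nat_rpow.2 (by linarith)
  simp_rw [realZeta, ← hsum.sum_add_tsum_nat_add M, Nat.cast_add, add_comm (M : ℝ)]

lemma summable_nat_add_rpow_neg (hs : 1 < s) (M : ℕ) :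
    Summable fun n : ℕ ↦ ((M : ℝ) + n) ^ (-s) := by
  simpa [add_comm] using
    (summable_nat_add_iff M).2 (summable_nat_rpow.2 (by linarith : -s < -1))

theorem realZeta_le (hs : 1 < s) {M : ℕ} (hM : 0 < M) :
    realZeta s ≤ ∑ n ∈ Finset.range M, (n : ℝ) ^ (-s) + (M - 1 / 2 : ℝ) ^ (1 - s) / (s - 1) := by
  have hM' : (1 : ℝ) ≤ M := by exact_mod_cast hM
  rw [realZeta_eq_sum_add_tsum hs M]
  have htele := hasSum_sub_rpow (by linarith : (0 : ℝ) < M - 1 / 2) hs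
  have hterm (n : ℕ) : ((M : ℝ) + n) ^ (-s) ≤
      (M - 1 / 2 + n : ℝ) ^ (1 - s) / (s - 1) - (M - 1 / 2 + n + 1 : ℝ) ^ (1 - s) / (s - 1) := by
    convert rpow_neg_le_sub (x := M + n) (by linarith [n.cast_nonneg (α := ℝ)]) hs using 4 <;> ring
  gcongr
  exact hasSum_le hterm (summable_nat_add_rpow_neg hs M).hasSum htele

theorem le_realZeta (hs : 1 < s) {M : ℕ} (hM : 0 < M) :
    ∑ n ∈ Finset.range M, (n : ℝ) ^ (-s) + ((M : ℝ) ^ (-s) / 2 + (M : ℝ) ^ (1 - s) / (s - 1))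
      ≤ realZeta s := by
  have hM' : (0 : ℝ) < M := by exact_mod_cast hM
  have hsum := summable_nat_add_rpow_neg hs M
  have hshift : HasSum (fun n : ℕ ↦ ((M : ℝ) + n + 1) ^ (-s))
      (∑' n : ℕ, ((M : ℝ) + n) ^ (-s) - (M : ℝ) ^ (-s)) := by
    simpa [add_assoc] using (hasSum_nat_add_iff' 1).2 hsum.hasSum
  have hle := hasSum_le (fun n : ℕ ↦ sub_le_rpow_neg_add_rpow_neg (x := M + n) (by positivity) hs)
    (hasSum_sub_rpow hM' hs) ((hsum.hasSum.add hshift).div_const 2)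
  rw [realZeta_eq_sum_add_tsum hs M]
  linarith

end RealZeta

section EulerProduct

variable {s : ℝ}

lemma rpow_neg_lt_one {a : ℕ} (ha : 2 ≤ a) (hs : 0 < s) : (a : ℝ) ^ (-s) < 1 :=
  rpow_lt_one_of_one_lt_of_neg (by exact_mod_cast ha) (neg_lt_zero.2 hs)

lemma hasProd_one_sub_rpow_neg_inv (hs : 1 < s) :
    HasProd (fun p : Nat.Primes ↦ (1 - (p : ℝ) ^ (-s))⁻¹) (realZeta s) := by
  let f : ℕ →*₀ ℝ :=
    { toFun n := (n : ℝ) ^ (-s)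
      map_zero' := by simp [show s ≠ 0 by linarith]
      map_one' := by simp
      map_mul' m n := by simp [mul_rpow] }
  refine EulerProduct.eulerProduct_completely_multiplicative_hasProd (f := f) ?_
  exact (summable_nat_rpow.2 (by linarith : -s < -1)).norm

lemma one_le_realZeta (hs : 1 < s) : 1 ≤ realZeta s := by
  simpa [realZeta] using
    (summable_nat_rpow.2 (by linarith : -s < -1)).le_tsum 1 fun n _ ↦ by positivity

lemma realZeta_pos (hs : 1 < s) : 0 < realZeta s :=
  zero_lt_one.trans_le (one_le_realZeta hs)

lemma hasSum_neg_log_one_sub_rpow_neg (hs : 1 < s) :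
    HasSum (fun p : {p : ℕ | p.Prime} ↦ -log (1 - (p.1 : ℝ) ^ (-s))) (log (realZeta s)) := by
  have hprod : HasProd (fun p : {p : ℕ | p.Prime} ↦ (1 - (p.1 : ℝ) ^ (-s))⁻¹) (realZeta s) :=
    hasProd_one_sub_rpow_neg_inv hs
  refine ((continuousAt_log (realZeta_pos hs).ne').tendsto.comp hprod).congr fun K ↦ ?_
  rw [Function.comp_apply, log_prod fun p _ ↦
    (inv_pos.2 (sub_pos.2 (rpow_neg_lt_one p.2.two_le (by linarith)))).ne']
  simp only [log_inv]

lemma artanh_eq_neg_log_sub_half_log {x : ℝ} (h0 : 0 ≤ x) (h1 : x < 1) :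
    artanh x = -log (1 - x) - 1 / 2 * -log (1 - x ^ 2) := by
  rw [artanh_eq_half_log ⟨by linarith, h1.le⟩, show 1 - x ^ 2 = (1 + x) * (1 - x) by ring,
    log_mul (by linarith) (by linarith), log_div (by linarith) (by linarith)]
  ring

theorem hasSum_artanh_rpow_neg (hs : 1 < s) :
    HasSum (fun p : {p : ℕ | p.Prime} ↦ artanh ((p.1 : ℝ) ^ (-s)))
      (1 / 2 * log (realZeta s ^ 2 / realZeta (2 * s))) := by
  have hZ := realZeta_pos hs
  have hZ2 := realZeta_pos (by linarith : 1 < 2 * s)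
  have hlog : 1 / 2 * log (realZeta s ^ 2 / realZeta (2 * s)) =
      log (realZeta s) - 1 / 2 * log (realZeta (2 * s)) := by
    rw [log_div (by positivity) hZ2.ne', log_pow]
    push_cast
    ring
  rw [hlog]
  refine ((hasSum_neg_log_one_sub_rpow_neg hs).sub
    ((hasSum_neg_log_one_sub_rpow_neg (by linarith : 1 < 2 * s)).mul_left (1 / 2))).congr_fun
    fun p ↦ ?_
  have hsq : (p.1 : ℝ) ^ (-(2 * s)) = ((p.1 : ℝ) ^ (-s)) ^ 2 := by
    rw [← rpow_natCast, ← rpow_mul (by positivity)]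
    push_cast
    ring_nf
  rw [artanh_eq_neg_log_sub_half_log (by positivity) (rpow_neg_lt_one p.2.two_le (by linarith)),
    hsq]

lemma le_artanh {x : ℝ} (h0 : 0 ≤ x) (h1 : x < 1) : x ≤ artanh x := by
  rw [artanh_eq_half_log ⟨by linarith, h1.le⟩]
  simpa using sum_range_le_log_div h0 h1 1

lemma artanh_le {x : ℝ} (h0 : 0 ≤ x) (h1 : x < 1) :
    artanh x ≤ (1 + x ^ 2 / 3 + x ^ 4 / (1 - x ^ 2)) * x := by
  rw [artanh_eq_half_log ⟨by linarith, h1.le⟩]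
  refine (log_div_le_sum_range_add h0 h1 2).trans_eq ?_
  norm_num [Finset.sum_range_succ]
  ring

end EulerProduct

section PrimesGE

/-- The primes `p ≥ N`. -/
def primesGE (N : ℕ) : Set ℕ := {p | p.Prime ∧ N ≤ p}

variable {N : ℕ} {s : ℝ}

lemma primesBelow_union_primesGE (N : ℕ) :
    (N.primesBelow : Set ℕ) ∪ primesGE N = {p | p.Prime} := by
  ext p
  simp only [primesGE, Set.mem_union, Finset.mem_coe, Nat.mem_primesBelow, Set.mem_ofPred_eq]
  have := lt_or_ge p N
  tauto

lemma disjoint_primesBelow_primesGE (N : ℕ) : Disjoint (N.primesBelow : Set ℕ) (primesGE N) :=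
  Set.disjoint_left.2 fun _ hp hp' ↦ hp'.2.not_gt (Nat.mem_primesBelow.1 hp).1

lemma summable_primesGE {f : ℕ → ℝ} (hf : Summable fun p : {p : ℕ | p.Prime} ↦ f p) (N : ℕ) :
    Summable fun p : primesGE N ↦ f p :=
  hf.comp_injective (Set.inclusion_injective fun _ hp ↦ hp.1)

lemma tsum_primes_eq_sum_add_tsum {f : ℕ → ℝ} (hf : Summable fun p : {p : ℕ | p.Prime} ↦ f p)
    (N : ℕ) :
    ∑' p : {p : ℕ | p.Prime}, f p = ∑ p ∈ N.primesBelow, f p + ∑' p : primesGE N, f p := by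
  rw [← primesBelow_union_primesGE N, Summable.tsum_union_disjoint
    (disjoint_primesBelow_primesGE N) (N.primesBelow.summable f) (summable_primesGE hf N),
    Finset.tsum_subtype' N.primesBelow f]

lemma summable_primesGE_rpow_neg (hs : 1 < s) (N : ℕ) :
    Summable fun p : primesGE N ↦ (p.1 : ℝ) ^ (-s) :=
  (summable_nat_rpow.2 (by linarith : -s < -1)).comp_injective Subtype.val_injective

/-- The product of `(1 + p ^ (-s)) / (1 - p ^ (-s))` over the primes `p ≥ N`, obtained by removing
the factors with `p < N` from the Euler product `ζ(s) ^ 2 / ζ(2 * s)`. -/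
noncomputable def eulerQuotient (N : ℕ) (s : ℝ) : ℝ :=
  realZeta s ^ 2 / realZeta (2 * s) *
    ∏ p ∈ N.primesBelow, (1 - (p : ℝ) ^ (-s)) / (1 + (p : ℝ) ^ (-s))

/-- The sum of `artanh (p ^ (-s))` over the primes `p ≥ N`, in closed form; it is slightly larger
than the sum of `p ^ (-s)`. -/
noncomputable def eulerTail (N : ℕ) (s : ℝ) : ℝ := 1 / 2 * log (eulerQuotient N s)

lemma one_sub_div_one_add_pos (hs : 1 < s) {p : ℕ} (hp : p ∈ N.primesBelow) :
    0 < (1 - (p : ℝ) ^ (-s)) / (1 + (p : ℝ) ^ (-s)) :=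
  div_pos (sub_pos.2 (rpow_neg_lt_one (Nat.prime_of_mem_primesBelow hp).two_le (by linarith)))
    (by positivity)

lemma realZeta_sq_div_pos (hs : 1 < s) : 0 < realZeta s ^ 2 / realZeta (2 * s) :=
  div_pos (pow_pos (realZeta_pos hs) 2) (realZeta_pos (by linarith))

theorem tsum_primesGE_artanh (hs : 1 < s) (N : ℕ) :
    ∑' p : primesGE N, artanh ((p.1 : ℝ) ^ (-s)) = eulerTail N s := by
  have hsum := hasSum_artanh_rpow_neg hs
  have hx (p : ℕ) (hp : p ∈ N.primesBelow) : (p : ℝ) ^ (-s) < 1 :=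
    rpow_neg_lt_one (Nat.prime_of_mem_primesBelow hp).two_le (by linarith)
  have hartanh : ∑ p ∈ N.primesBelow, artanh ((p : ℝ) ^ (-s)) =
      -(1 / 2 * ∑ p ∈ N.primesBelow, log ((1 - (p : ℝ) ^ (-s)) / (1 + (p : ℝ) ^ (-s)))) := by
    rw [Finset.mul_sum, ← Finset.sum_neg_distrib]
    refine Finset.sum_congr rfl fun p hp ↦ ?_
    have h0 : 0 ≤ (p : ℝ) ^ (-s) := by positivity
    rw [artanh_eq_half_log ⟨by linarith, (hx p hp).le⟩, ← inv_div (1 + _), log_inv]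
    ring
  have hsplit := tsum_primes_eq_sum_add_tsum (f := fun p ↦ artanh ((p : ℝ) ^ (-s))) hsum.summable N
  rw [hsum.tsum_eq, hartanh] at hsplit
  rw [eulerTail, eulerQuotient, log_mul (realZeta_sq_div_pos hs).ne'
    (Finset.prod_pos fun p ↦ one_sub_div_one_add_pos hs).ne',
    log_prod fun p hp ↦ (one_sub_div_one_add_pos hs hp).ne']
  linarith

lemma summable_primesGE_artanh (hs : 1 < s) (N : ℕ) :
    Summable fun p : primesGE N ↦ artanh ((p.1 : ℝ) ^ (-s)) :=
  summable_primesGE (f := fun p ↦ artanh ((p : ℝ) ^ (-s))) (hasSum_artanh_rpow_neg hs).summable N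

lemma tsum_primesGE_rpow_neg_le_eulerTail (hs : 1 < s) (N : ℕ) :
    ∑' p : primesGE N, (p.1 : ℝ) ^ (-s) ≤ eulerTail N s := by
  rw [← tsum_primesGE_artanh hs]
  refine (summable_primesGE_rpow_neg hs N).tsum_le_tsum (fun p ↦ ?_) (summable_primesGE_artanh hs N)
  exact le_artanh (by positivity) (rpow_neg_lt_one p.2.1.two_le (by linarith))

lemma one_le_eulerQuotient (hs : 1 < s) (N : ℕ) : 1 ≤ eulerQuotient N s := by
  have hpos : 0 < eulerQuotient N s :=
    mul_pos (realZeta_sq_div_pos hs) (Finset.prod_pos fun p ↦ one_sub_div_one_add_pos hs)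
  have htail : 0 ≤ eulerTail N s :=
    (tsum_nonneg fun p ↦ by positivity).trans (tsum_primesGE_rpow_neg_le_eulerTail hs N)
  rw [← log_nonneg_iff hpos]
  rw [eulerTail] at htail
  linarith

lemma eulerTail_le (hs : 1 < s) (hN : 2 ≤ N) :
    eulerTail N s ≤ (1 + (1 / N) ^ 2 / 3 + (1 / N) ^ 4 / (1 - (1 / N) ^ 2)) *
      ∑' p : primesGE N, (p.1 : ℝ) ^ (-s) := by
  have hN0 : (2 : ℝ) ≤ N := by exact_mod_cast hN
  rw [← tsum_primesGE_artanh hs, ← tsum_mul_left]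
  refine (summable_primesGE_artanh hs N).tsum_le_tsum (fun p ↦ ?_)
    ((summable_primesGE_rpow_neg hs N).mul_left _)
  have hp : (N : ℝ) ≤ p.1 := by exact_mod_cast p.2.2
  have hpN : (p.1 : ℝ) ^ (-s) ≤ 1 / N :=
    calc (p.1 : ℝ) ^ (-s) ≤ (p.1 : ℝ) ^ (-1 : ℝ) :=
          rpow_le_rpow_of_exponent_le (by linarith) (by linarith)
      _ = 1 / p.1 := by rw [rpow_neg_one, one_div]
      _ ≤ 1 / N := by gcongr
  have hN1 : (1 / N : ℝ) ^ 2 < 1 :=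
    pow_lt_one₀ (by positivity) ((div_lt_one (by linarith)).2 (by linarith)) two_ne_zero
  refine (artanh_le (by positivity) (rpow_neg_lt_one p.2.1.two_le (by linarith))).trans ?_
  gcongr

end PrimesGE

section SmallExponents

variable {u ε : ℝ}

lemma tsum_primes_rpow_neg_le (hu : 0 < u) :
    ∑' p : {p : ℕ | p.Prime}, (p.1 : ℝ) ^ (-(1 + u)) ≤ u * log 2 - log u := by
  have hs : 1 < 1 + u := by linarith
  have hlt (p : {p : ℕ | p.Prime}) : (p.1 : ℝ) ^ (-(1 + u)) < 1 :=
    rpow_neg_lt_one p.2.two_le (by linarith)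
  have hsum : Summable fun p : {p : ℕ | p.Prime} ↦ (p.1 : ℝ) ^ (-(1 + u)) :=
    (summable_nat_rpow.2 (by linarith)).comp_injective Subtype.val_injective
  have hzeta : realZeta (1 + u) ≤ 2 ^ u / u := by
    refine (realZeta_le hs one_pos).trans_eq ?_
    rw [Finset.sum_range_one, Nat.cast_zero, zero_rpow (by linarith), zero_add, Nat.cast_one,
      sub_self_div_two, sub_add_cancel_left, add_sub_cancel_left, one_div, inv_rpow two_pos.le,
      rpow_neg two_pos.le, inv_inv]
  calc ∑' p : {p : ℕ | p.Prime}, (p.1 : ℝ) ^ (-(1 + u))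
      ≤ log (realZeta (1 + u)) := hasSum_le
        (fun p ↦ by linarith [log_le_sub_one_of_pos (sub_pos.2 (hlt p))])
        hsum.hasSum (hasSum_neg_log_one_sub_rpow_neg hs)
    _ ≤ log (2 ^ u / u) := log_le_log (realZeta_pos hs) hzeta
    _ = u * log 2 - log u := by
      rw [log_div (rpow_pos_of_pos two_pos u).ne' hu.ne', log_rpow two_pos]

lemma integral_mul_log_two_sub_log (ε : ℝ) :
    ∫ u in (0 : ℝ)..ε, (u * log 2 - log u) = ε ^ 2 / 2 * log 2 + ε - ε * log ε := by
  rw [intervalIntegral.integral_sub (Continuous.intervalIntegrable (by fun_prop) _ _)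
    intervalIntegral.intervalIntegrable_log', intervalIntegral.integral_mul_const, integral_id,
    integral_log]
  simp only [ne_eq, OfNat.ofNat_ne_zero, not_false_eq_true, zero_pow, sub_zero, log_zero, mul_zero,
    add_zero]
  ring

lemma integral_exp_neg_mul {y : ℝ} (hy : y ≠ 0) (a b : ℝ) :
    ∫ u in a..b, exp (-(y * u)) = (exp (-(y * a)) - exp (-(y * b))) / y := by
  have := intervalIntegral.integral_comp_mul_left exp (neg_ne_zero.2 hy) (a := a) (b := b)
  simp only [neg_mul, integral_exp, smul_eq_mul] at this
  rw [this]
  field_simp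
  ring

lemma sum_one_sub_exp_div_le (hε : 0 ≤ ε) (K : Finset {p : ℕ | p.Prime}) :
    ∑ p ∈ K, 1 / (p.1 : ℝ) * ((1 - exp (-(log p.1 * ε))) / log p.1) ≤
      ε ^ 2 / 2 * log 2 + ε - ε * log ε := by
  have hlog (p : {p : ℕ | p.Prime}) : log p.1 ≠ 0 :=
    (log_pos (by exact_mod_cast p.2.one_lt)).ne'
  have hterm (p : {p : ℕ | p.Prime}) (u : ℝ) :
      1 / (p.1 : ℝ) * exp (-(log p.1 * u)) = (p.1 : ℝ) ^ (-(1 + u)) := by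
    have hp : (0 : ℝ) < p.1 := by exact_mod_cast p.2.pos
    rw [rpow_def_of_pos hp, neg_add, mul_add, exp_add, mul_neg_one, exp_neg (log _), exp_log hp]
    ring_nf
  have hint (p : {p : ℕ | p.Prime}) : IntervalIntegrable
      (fun u ↦ 1 / (p.1 : ℝ) * exp (-(log p.1 * u))) volume 0 ε :=
    Continuous.intervalIntegrable (by fun_prop) _ _
  calc ∑ p ∈ K, 1 / (p.1 : ℝ) * ((1 - exp (-(log p.1 * ε))) / log p.1)
      = ∫ u in (0 : ℝ)..ε, ∑ p ∈ K, 1 / (p.1 : ℝ) * exp (-(log p.1 * u)) := by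
        rw [intervalIntegral.integral_finsetSum fun p _ ↦ hint p]
        refine Finset.sum_congr rfl fun p _ ↦ ?_
        rw [intervalIntegral.integral_const_mul, integral_exp_neg_mul (hlog p)]
        simp
    _ ≤ ∫ u in (0 : ℝ)..ε, (u * log 2 - log u) := by
        refine intervalIntegral.integral_mono_on_of_le_Ioo hε
          (Continuous.intervalIntegrable (by fun_prop) _ _)
          ((Continuous.intervalIntegrable (by fun_prop) _ _).sub
            intervalIntegral.intervalIntegrable_log') fun u hu ↦ ?_
        simp only [hterm]
        refine (Summable.sum_le_tsum K (fun p _ ↦ by positivity) ?_).trans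
          (tsum_primes_rpow_neg_le hu.1)
        exact (summable_nat_rpow.2 (by linarith [hu.1])).comp_injective Subtype.val_injective
    _ = ε ^ 2 / 2 * log 2 + ε - ε * log ε := integral_mul_log_two_sub_log ε

theorem summable_primes_one_div_mul_log :
    Summable fun p : {p : ℕ | p.Prime} ↦ 1 / ((p.1 : ℝ) * log p.1) := by
  have hlog (p : {p : ℕ | p.Prime}) : 0 < log p.1 := log_pos (by exact_mod_cast p.2.one_lt)
  refine summable_of_sum_le (c := 2 * (1 ^ 2 / 2 * log 2 + 1 - 1 * log 1))
    (fun p ↦ by have := hlog p; positivity) fun K ↦ ?_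
  refine le_trans ?_ (mul_le_mul_of_nonneg_left (sum_one_sub_exp_div_le zero_le_one K) two_pos.le)
  rw [Finset.mul_sum]
  refine Finset.sum_le_sum fun p _ ↦ ?_
  have hp : (2 : ℝ) ≤ p.1 := by exact_mod_cast p.2.two_le
  have hexp : exp (-(log p.1 * 1)) ≤ 1 / 2 := by
    rw [mul_one, exp_neg, exp_log (by linarith), ← one_div]
    exact one_div_le_one_div_of_le two_pos hp
  have hq : 1 / log p.1 ≤ 2 * ((1 - exp (-(log p.1 * 1))) / log p.1) := by
    rw [mul_div_assoc']
    have := hlog p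
    gcongr
    linarith
  calc 1 / ((p.1 : ℝ) * log p.1) = 1 / (p.1 : ℝ) * (1 / log p.1) := by rw [one_div_mul_one_div]
    _ ≤ 1 / (p.1 : ℝ) * (2 * ((1 - exp (-(log p.1 * 1))) / log p.1)) := by gcongr
    _ = _ := by ring

lemma one_sub_exp_div_le_of_le {x y : ℝ} (hε : 0 ≤ ε) (hx : 0 < x) (hxy : x ≤ y) :
    (1 - exp (-(y * ε))) / y ≤ (1 - exp (-(x * ε))) / x := by
  have hmono : ∫ u in (0 : ℝ)..ε, exp (-(y * u)) ≤ ∫ u in (0 : ℝ)..ε, exp (-(x * u)) := by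
    refine intervalIntegral.integral_mono_on hε (Continuous.intervalIntegrable (by fun_prop) _ _)
      (Continuous.intervalIntegrable (by fun_prop) _ _) fun u hu ↦ ?_
    have := hu.1
    gcongr
  simpa [integral_exp_neg_mul hx.ne', integral_exp_neg_mul (hx.trans_le hxy).ne'] using hmono

lemma transSum_primes_eq_sum_add {t : ℝ} (ht : -log 2 < t) (N : ℕ) :
    transSum {p | p.Prime} t =
      ∑ p ∈ N.primesBelow, 1 / ((p : ℝ) * (log p + t)) + transSum (primesGE N) t :=
  tsum_primes_eq_sum_add_tsum (f := fun p ↦ 1 / ((p : ℝ) * (log p + t)))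
    (summable_one_div_mul_log_add (fun _ hp ↦ Nat.Prime.two_le hp)
      summable_primes_one_div_mul_log ht) N

end SmallExponents

section Quadrature

lemma mul_cosh_le_sinh {r x : ℝ} (hr : r ^ 2 ≤ 1 / 3) (hx : 0 ≤ x) :
    x * cosh (r * x) ≤ sinh x := by
  refine hasSum_le (fun n ↦ ?_) ((hasSum_cosh (r * x)).mul_left x) (hasSum_sinh x)
  have hpow : (r ^ 2) ^ n * (2 * n + 1) ≤ 1 := by
    have hbern : 1 + (n : ℝ) * 2 ≤ (1 + 2) ^ n := one_add_mul_le_pow (by norm_num) n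
    calc (r ^ 2) ^ n * (2 * n + 1) ≤ (1 / 3) ^ n * (1 + 2) ^ n := by gcongr; linarith
      _ = 1 := by rw [← mul_pow]; norm_num
  rw [Nat.factorial_succ, mul_pow, pow_mul r, mul_div_assoc', div_le_div_iff₀ (by positivity)
    (by positivity)]
  push_cast
  calc x * ((r ^ 2) ^ n * x ^ (2 * n)) * ((2 * n + 1) * (2 * n).factorial)
      = (r ^ 2) ^ n * (2 * n + 1) * (x ^ (2 * n + 1) * (2 * n).factorial) := by ring
    _ ≤ 1 * (x ^ (2 * n + 1) * (2 * n).factorial) := by gcongr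
    _ = _ := one_mul _

lemma three_mul_sinh_le {x : ℝ} (hx : 0 ≤ x) : 3 * sinh x ≤ x * (cosh x + 2) := by
  rw [mul_add]
  refine hasSum_le (fun n ↦ ?_) ((hasSum_sinh x).mul_left 3)
    (((hasSum_cosh x).mul_left x).add (hasSum_ite_eq 0 (x * 2)))
  rcases n.eq_zero_or_pos with rfl | hn
  · simp only [mul_zero, zero_add, pow_one, Nat.factorial_one, Nat.cast_one, div_one, pow_zero,
      Nat.factorial_zero, mul_one, ↓reduceIte]
    linarith
  have hn' : (1 : ℝ) ≤ n := by exact_mod_cast hn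
  rw [if_neg hn.ne', add_zero, Nat.factorial_succ, mul_div_assoc', mul_div_assoc',
    div_le_div_iff₀ (by positivity) (by positivity)]
  push_cast
  calc 3 * x ^ (2 * n + 1) * (2 * n).factorial
      ≤ (2 * n + 1) * x ^ (2 * n + 1) * (2 * n).factorial := by gcongr; linarith
    _ = _ := by ring

/-- A quadrature rule, as a list of pairs (weight, node). -/
abbrev QuadRule : Type := List (ℚ × ℚ)

namespace QuadRule

/-- The value `∑ w * f u` of a quadrature rule on the function `f`. -/
noncomputable def eval (L : QuadRule) (f : ℝ → ℝ) : ℝ :=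
  (L.map fun q ↦ (q.1 : ℝ) * f q.2).sum

/-- The two-point Gauss rule on `[a, b]`, with `591 / 1024` approximating `1 / √3` from below. -/
def gaussPanel (a b : ℚ) : QuadRule :=
  [((b - a) / 2, (a + b) / 2 - 591 / 1024 * ((b - a) / 2)),
    ((b - a) / 2, (a + b) / 2 + 591 / 1024 * ((b - a) / 2))]

/-- Simpson's rule on `[a, b]`. -/
def simpsonPanel (a b : ℚ) : QuadRule :=
  [((b - a) / 6, a), (2 * (b - a) / 3, (a + b) / 2), ((b - a) / 6, b)]

/-- The composite rule on `[u 0, u K]` that applies `panel` to each of the `K` intervals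
`[u k, u (k + 1)]`. -/
def composite (panel : ℚ → ℚ → QuadRule) (u : ℕ → ℚ) : ℕ → QuadRule
  | 0 => []
  | K + 1 => panel (u K) (u (K + 1)) ++ composite panel u K

variable {f g : ℝ → ℝ} {y : ℝ} {u : ℕ → ℚ}

@[simp] lemma eval_nil (f : ℝ → ℝ) : eval [] f = 0 := rfl

@[simp] lemma eval_cons (q : ℚ × ℚ) (L : QuadRule) (f : ℝ → ℝ) :
    eval (q :: L) f = q.1 * f q.2 + eval L f := by
  simp [eval]

lemma eval_append (L L' : QuadRule) (f : ℝ → ℝ) : eval (L ++ L') f = eval L f + eval L' f := by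
  simp [eval]

lemma eval_const_mul (L : QuadRule) (c : ℝ) (f : ℝ → ℝ) :
    eval L (fun u ↦ c * f u) = c * eval L f := by
  induction L with
  | nil => simp
  | cons q L ih => rw [eval_cons, eval_cons, ih]; ring

lemma eval_mono {L : QuadRule} (hL : ∀ q ∈ L, 0 ≤ q.1) (hfg : ∀ q ∈ L, f q.2 ≤ g q.2) :
    eval L f ≤ eval L g :=
  List.sum_le_sum fun q hq ↦
    mul_le_mul_of_nonneg_left (hfg q hq) (Rat.cast_nonneg.2 (hL q hq))

lemma hasSum_eval {ι : Type*} {F : ι → ℝ → ℝ} {L : QuadRule}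
    (hF : ∀ q ∈ L, HasSum (fun i ↦ F i q.2) (f q.2)) :
    HasSum (fun i ↦ eval L (F i)) (eval L f) := by
  induction L with
  | nil => simp
  | cons q L ih =>
    rw [List.forall_mem_cons] at hF
    simpa only [eval_cons] using (hF.1.mul_left _).add (ih hF.2)

lemma eval_composite_le {panel : ℚ → ℚ → QuadRule} {F : ℚ → ℝ} (hu : Monotone u)
    (hpanel : ∀ a b, a ≤ b → eval (panel a b) f ≤ F a - F b) (K : ℕ) :
    eval (composite panel u K) f ≤ F (u 0) - F (u K) := by
  induction K with
  | zero => simp [composite]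
  | succ K ih =>
    rw [composite, eval_append]
    linarith [hpanel _ _ (hu K.le_succ)]

lemma le_eval_composite {panel : ℚ → ℚ → QuadRule} {F : ℚ → ℝ} (hu : Monotone u)
    (hpanel : ∀ a b, a ≤ b → F a - F b ≤ eval (panel a b) f) (K : ℕ) :
    F (u 0) - F (u K) ≤ eval (composite panel u K) f := by
  induction K with
  | zero => simp [composite]
  | succ K ih =>
    rw [composite, eval_append]
    linarith [hpanel _ _ (hu K.le_succ)]

lemma exp_sub_exp_eq (a b y : ℝ) :
    exp (-(y * a)) - exp (-(y * b)) =
      2 * exp (-(y * ((a + b) / 2))) * sinh (y * ((b - a) / 2)) := by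
  rw [sinh_eq, mul_div_assoc', mul_assoc, mul_div_cancel_left₀ _ two_ne_zero, mul_sub, ← exp_add,
    ← exp_add]
  ring_nf

lemma exp_add_exp_eq (m d y : ℝ) :
    exp (-(y * (m - d))) + exp (-(y * (m + d))) = 2 * exp (-(y * m)) * cosh (y * d) := by
  rw [cosh_eq, show -(y * (m - d)) = -(y * m) + y * d by ring,
    show -(y * (m + d)) = -(y * m) + -(y * d) by ring, exp_add, exp_add]
  ring

lemma eval_gaussPanel_exp_le (hy : 0 < y) (a b : ℚ) (hab : a ≤ b) :
    eval (gaussPanel a b) (fun u ↦ exp (-(y * u))) ≤ exp (-(y * a)) / y - exp (-(y * b)) / y := by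
  have h : (0 : ℝ) ≤ (b - a) / 2 := by
    have : (a : ℝ) ≤ b := by exact_mod_cast hab
    linarith
  have hcosh := mul_cosh_le_sinh (r := 591 / 1024) (by norm_num) (mul_nonneg hy.le h)
  rw [← sub_div, exp_sub_exp_eq, le_div_iff₀ hy]
  simp only [gaussPanel, eval_cons, eval_nil, add_zero]
  push_cast
  rw [← mul_add, exp_add_exp_eq]
  rw [show 591 / 1024 * (y * (((b : ℝ) - a) / 2)) = y * (591 / 1024 * ((b - a) / 2)) by ring]
    at hcosh
  linear_combination 2 * exp (-(y * ((a + b) / 2))) * hcosh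

lemma le_eval_simpsonPanel_exp (hy : 0 < y) (a b : ℚ) (hab : a ≤ b) :
    exp (-(y * a)) / y - exp (-(y * b)) / y ≤
      eval (simpsonPanel a b) (fun u ↦ exp (-(y * u))) := by
  have h : (0 : ℝ) ≤ (b - a) / 2 := by
    have : (a : ℝ) ≤ b := by exact_mod_cast hab
    linarith
  have hsinh := three_mul_sinh_le (mul_nonneg hy.le h)
  have hends := exp_add_exp_eq ((a + b) / 2) ((b - a) / 2) y
  rw [show ((a : ℝ) + b) / 2 - (b - a) / 2 = a by ring,
    show ((a : ℝ) + b) / 2 + (b - a) / 2 = b by ring] at hends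
  rw [← sub_div, exp_sub_exp_eq, div_le_iff₀ hy]
  simp only [simpsonPanel, eval_cons, eval_nil, add_zero]
  push_cast
  linear_combination 2 / 3 * exp (-(y * ((a + b) / 2))) * hsinh - y * ((b - a) / 6) * hends

end QuadRule

end Quadrature

section TailBounds

variable {A : Set ℕ} {N : ℕ} {L : QuadRule} {t ε : ℝ}

lemma one_div_mul_exp_neg_mul_eq {a : ℕ} (ha : 0 < a) (t v : ℝ) :
    1 / (a : ℝ) * exp (-((log a + t) * v)) = exp (-(t * v)) * (a : ℝ) ^ (-(1 + v)) := by
  rw [rpow_def_of_pos (by positivity), show log a * -(1 + v) = -log a + -(log a * v) by ring,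
    exp_add, exp_neg (log a), exp_log (by positivity), add_mul, neg_add, exp_add]
  ring

namespace QuadRule

lemma hasSum_eval_exp_neg_mul (hA : ∀ a ∈ A, 0 < a) (hL : ∀ q ∈ L, 0 < q.2) (t : ℝ) :
    HasSum (fun a : A ↦ 1 / (a.1 : ℝ) * eval L (fun v ↦ exp (-((log a.1 + t) * v))))
      (eval L fun v ↦ exp (-(t * v)) * ∑' a : A, (a.1 : ℝ) ^ (-(1 + v))) := by
  simp only [← eval_const_mul]
  refine hasSum_eval fun q hq ↦ ?_
  have hq' : -(1 + (q.2 : ℝ)) < -1 := by have : (0 : ℝ) < q.2 := mod_cast hL q hq; linarith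
  have hsum : Summable fun a : A ↦ (a.1 : ℝ) ^ (-(1 + (q.2 : ℝ))) :=
    (summable_nat_rpow.2 hq').comp_injective Subtype.val_injective
  exact (hsum.hasSum.mul_left _).congr_fun fun a ↦ one_div_mul_exp_neg_mul_eq (hA a a.2) t q.2

end QuadRule

lemma summable_transSum_primesGE (ht : -log 2 < t) (N : ℕ) :
    Summable fun p : primesGE N ↦ 1 / ((p.1 : ℝ) * (log p.1 + t)) :=
  summable_one_div_mul_log_add (fun _ hp ↦ hp.1.two_le)
    (summable_primesGE (f := fun p ↦ 1 / ((p : ℝ) * log p)) summable_primes_one_div_mul_log N) ht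

theorem QuadRule.eval_le_transSum_primesGE (hL : ∀ q ∈ L, 0 < q.2)
    (hinv : ∀ y : ℝ, 0 < y → eval L (fun v ↦ exp (-(y * v))) ≤ 1 / y) (ht : -log 2 < t) (N : ℕ) :
    eval L (fun v ↦ exp (-(t * v)) * ∑' p : primesGE N, (p.1 : ℝ) ^ (-(1 + v))) ≤
      transSum (primesGE N) t := by
  have hA {p : ℕ} (hp : p ∈ primesGE N) : 0 < p := hp.1.pos
  refine hasSum_le (fun p ↦ ?_) (hasSum_eval_exp_neg_mul (fun _ ↦ hA) hL t)
    (summable_transSum_primesGE ht N).hasSum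
  rw [← one_div_mul_one_div]
  exact mul_le_mul_of_nonneg_left (hinv _ (log_add_pos p.2.1.two_le ht)) (by positivity)

lemma sum_primesGE_one_sub_exp_div_le (ht : 0 ≤ t) (hε : 0 ≤ ε) (K : Finset (primesGE N)) :
    ∑ p ∈ K, 1 / (p.1 : ℝ) * ((1 - exp (-((log p.1 + t) * ε))) / (log p.1 + t)) ≤
      ε ^ 2 / 2 * log 2 + ε - ε * log ε := by
  let ι : primesGE N ↪ {p : ℕ | p.Prime} := ⟨_, Set.inclusion_injective fun _ hp ↦ hp.1⟩
  refine le_trans ?_ (sum_one_sub_exp_div_le hε (K.map ι))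
  rw [Finset.sum_map]
  refine Finset.sum_le_sum fun p _ ↦ mul_le_mul_of_nonneg_left ?_ (by positivity)
  exact one_sub_exp_div_le_of_le hε (log_pos (by exact_mod_cast p.2.1.one_lt))
    (le_add_of_nonneg_right ht)

theorem QuadRule.transSum_primesGE_le_eval_add (hL : ∀ q ∈ L, 0 < q.2)
    (hinv : ∀ y : ℝ, 1 ≤ y → 1 / y ≤ (1 - exp (-(y * ε))) / y + eval L (fun v ↦ exp (-(y * v))))
    (ht : 0 ≤ t) (hε : 0 ≤ ε) (hN : 3 ≤ N) :
    transSum (primesGE N) t ≤ ε ^ 2 / 2 * log 2 + ε - ε * log ε +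
      eval L (fun v ↦ exp (-(t * v)) * ∑' p : primesGE N, (p.1 : ℝ) ^ (-(1 + v))) := by
  have hA {p : ℕ} (hp : p ∈ primesGE N) : 0 < p := hp.1.pos
  have hlog (p : primesGE N) : 1 ≤ log p.1 := by
    rw [le_log_iff_exp_le (by exact_mod_cast hA p.2)]
    have : (3 : ℝ) ≤ p.1 := by exact_mod_cast hN.trans p.2.2
    linarith [exp_one_lt_three]
  have hterm (p : primesGE N) :
      0 ≤ 1 / (p.1 : ℝ) * ((1 - exp (-((log p.1 + t) * ε))) / (log p.1 + t)) := by
    have h1 : 0 ≤ log p.1 + t := by linarith [hlog p]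
    have h2 : 0 ≤ 1 - exp (-((log p.1 + t) * ε)) := by
      rw [sub_nonneg, exp_le_one_iff]
      nlinarith
    positivity
  have hsmall := summable_of_sum_le hterm (sum_primesGE_one_sub_exp_div_le ht hε)
  have heval := hasSum_eval_exp_neg_mul (fun _ ↦ hA) hL t
  calc transSum (primesGE N) t ≤ _ :=
        hasSum_le (fun p ↦ ?_)
          (summable_transSum_primesGE (by linarith [log_pos one_lt_two]) N).hasSum
          (hsmall.hasSum.add heval)
    _ ≤ _ := by
        gcongr
        exact hsmall.tsum_le_of_sum_le (sum_primesGE_one_sub_exp_div_le ht hε)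
  rw [← mul_add, ← one_div_mul_one_div]
  exact mul_le_mul_of_nonneg_left (hinv _ (by linarith [hlog p])) (by positivity)

end TailBounds

section IntervalArithmetic

/-- An interval of nonnegative reals with fixed-point endpoints: it stands for the `x` with
`lo ≤ x * unit ≤ hi`. -/
structure FixedInterval where
  /-- The lower endpoint, in multiples of `1 / unit`. -/
  lo : ℕ
  /-- The upper endpoint, in multiples of `1 / unit`. -/
  hi : ℕ

namespace FixedInterval

/-- The denominator of the fixed-point numbers. -/
def unit : ℕ := 2 ^ 50

/-- The relation `x ∈ I`; as a separate definition, it is never unfolded when the kernel compares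
two membership statements. -/
def Mem (I : FixedInterval) (x : ℝ) : Prop := I.lo ≤ x * unit ∧ x * unit ≤ I.hi

instance : Membership ℝ FixedInterval := ⟨Mem⟩

/-- The interval `{n}`. -/
def ofNat (n : ℕ) : FixedInterval := ⟨n * unit, n * unit⟩

/-- An enclosure of a rational number `q ≥ 0`. -/
def ofRat (q : ℚ) : FixedInterval :=
  ⟨q.num.toNat * unit / q.den, q.num.toNat * unit / q.den + 1⟩

/-- An enclosure of `x + y`. -/
def add (I J : FixedInterval) : FixedInterval := ⟨I.lo + J.lo, I.hi + J.hi⟩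

/-- An enclosure of `x - y` for `y ≤ x`; the truncation of the subtraction at zero is harmless. -/
def sub (I J : FixedInterval) : FixedInterval := ⟨I.lo - J.hi, I.hi - J.lo⟩

/-- An enclosure of `x * y`. -/
def mul (I J : FixedInterval) : FixedInterval := ⟨I.lo * J.lo / unit, I.hi * J.hi / unit + 1⟩

/-- An enclosure of `x / m`. -/
def divNat (I : FixedInterval) (m : ℕ) : FixedInterval := ⟨I.lo / m, I.hi / m + 1⟩

/-- An enclosure of `m * x`. -/
def nsmul (m : ℕ) (I : FixedInterval) : FixedInterval := ⟨m * I.lo, m * I.hi⟩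

/-- An enclosure of `x⁻¹` for `1 ≤ x`. -/
def inv (I : FixedInterval) : FixedInterval :=
  ⟨unit * unit / I.hi, unit * unit / max I.lo unit + 1⟩

/-- An enclosure of `∑ a ∈ l, f a`. -/
def sum {α : Type*} (l : List α) (F : α → FixedInterval) : FixedInterval :=
  (l.map F).foldr add (ofNat 0)

/-- An enclosure of `∏ a ∈ l, f a`. -/
def prod {α : Type*} (l : List α) (F : α → FixedInterval) : FixedInterval :=
  (l.map F).foldr mul (ofNat 1)

/-- An enclosure of `∑ i < n, c i * x ^ i + x ^ n * r`. -/
def horner (C : ℕ → FixedInterval) (R X : FixedInterval) : ℕ → FixedInterval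
  | 0 => R
  | n + 1 => horner C (add (C n) (mul X R)) X n

variable {x y : ℝ} {I J : FixedInterval}

lemma mem_def : x ∈ I ↔ I.lo ≤ x * unit ∧ x * unit ≤ I.hi := Iff.rfl

lemma unit_pos : (0 : ℝ) < unit := by norm_num [unit]

lemma nonneg_of_mem (hx : x ∈ I) : 0 ≤ x :=
  nonneg_of_mul_nonneg_left (I.lo.cast_nonneg.trans hx.1) unit_pos

lemma div_le_natDiv_add_one (a b : ℕ) : (a : ℝ) / b ≤ ((a / b + 1 : ℕ) : ℝ) := by
  rw [← Nat.floor_div_eq_div (K := ℝ)]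
  exact_mod_cast (Nat.lt_floor_add_one _).le

lemma natCast_sub_eq_max (a b : ℕ) : ((a - b : ℕ) : ℝ) = max ((a : ℝ) - b) 0 := by
  rcases le_total b a with h | h
  · rw [Nat.cast_sub h, max_eq_left (sub_nonneg.2 (Nat.cast_le.2 h))]
  · rw [Nat.sub_eq_zero_of_le h, max_eq_right (sub_nonpos.2 (Nat.cast_le.2 h)), Nat.cast_zero]

lemma mem_ofNat (n : ℕ) : (n : ℝ) ∈ ofNat n := by simp [mem_def, ofNat]

lemma mem_ofRat {q : ℚ} (hq : 0 ≤ q) : (q : ℝ) ∈ ofRat q := by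
  have hval : (q : ℝ) * unit = ((q.num.toNat * unit : ℕ) : ℝ) / (q.den : ℕ) := by
    have hnum : ((q.num.toNat : ℤ) : ℝ) = q.num :=
      congrArg _ (Int.toNat_of_nonneg (Rat.num_nonneg.2 hq))
    rw [Rat.cast_def, Nat.cast_mul, ← hnum, Int.cast_natCast, div_mul_eq_mul_div]
  rw [mem_def, hval]
  exact ⟨Nat.cast_div_le, div_le_natDiv_add_one _ _⟩

lemma mem_add (hx : x ∈ I) (hy : y ∈ J) : x + y ∈ add I J := by
  rw [mem_def, add_mul, add, Nat.cast_add, Nat.cast_add]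
  exact ⟨add_le_add hx.1 hy.1, add_le_add hx.2 hy.2⟩

lemma mem_sub (hx : x ∈ I) (hy : y ∈ J) (hyx : y ≤ x) : x - y ∈ sub I J := by
  have h : 0 ≤ (x - y) * unit := mul_nonneg (sub_nonneg.2 hyx) unit_pos.le
  rw [sub_mul] at h
  rw [mem_def, sub_mul, sub, natCast_sub_eq_max, natCast_sub_eq_max]
  exact ⟨max_le (sub_le_sub hx.1 hy.2) h, (sub_le_sub hx.2 hy.1).trans (le_max_left _ _)⟩

lemma mem_mul (hx : x ∈ I) (hy : y ∈ J) : x * y ∈ mul I J := by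
  have hx0 := nonneg_of_mem hx
  have hy0 := nonneg_of_mem hy
  have hu := unit_pos
  have hval : x * y * unit = x * unit * (y * unit) / unit := by field_simp
  rw [mem_def, hval]
  refine ⟨Nat.cast_div_le.trans ?_, le_trans ?_ (div_le_natDiv_add_one _ _)⟩
  · rw [Nat.cast_mul]
    gcongr
    exacts [hx.1, hy.1]
  · rw [Nat.cast_mul]
    gcongr
    exacts [hx.2, hy.2]

lemma mem_divNat (hx : x ∈ I) (m : ℕ) : x / m ∈ divNat I m := by
  rw [mem_def, div_mul_eq_mul_div]
  exact ⟨Nat.cast_div_le.trans (by gcongr; exact hx.1),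
    le_trans (by gcongr; exact hx.2) (div_le_natDiv_add_one _ _)⟩

lemma mem_nsmul (m : ℕ) (hx : x ∈ I) : m * x ∈ nsmul m I := by
  rw [mem_def, mul_assoc, nsmul, Nat.cast_mul, Nat.cast_mul]
  exact ⟨by gcongr; exact hx.1, by gcongr; exact hx.2⟩

lemma mem_inv (hx : x ∈ I) (h1 : 1 ≤ x) : x⁻¹ ∈ inv I := by
  have hu := unit_pos
  have hval : x⁻¹ * unit = unit * unit / (x * unit) := by field_simp
  have hlo : ((max I.lo unit : ℕ) : ℝ) ≤ x * unit := by
    rw [Nat.cast_max]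
    exact max_le hx.1 (le_mul_of_one_le_left hu.le h1)
  have hmax : (0 : ℝ) < (max I.lo unit : ℕ) :=
    hu.trans_le (Nat.cast_le.2 (le_max_right _ _))
  rw [mem_def, hval]
  refine ⟨Nat.cast_div_le.trans ?_, le_trans ?_ (div_le_natDiv_add_one _ _)⟩
  · rw [Nat.cast_mul]
    gcongr
    exact hx.2
  · rw [Nat.cast_mul]
    gcongr

lemma mem_sum {α : Type*} {l : List α} {f : α → ℝ} {F : α → FixedInterval}
    (h : ∀ a ∈ l, f a ∈ F a) : (l.map f).sum ∈ sum l F := by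
  induction l with
  | nil => exact_mod_cast mem_ofNat 0
  | cons a l ih =>
    rw [List.forall_mem_cons] at h
    simpa [sum] using mem_add h.1 (ih h.2)

lemma mem_prod {α : Type*} {l : List α} {f : α → ℝ} {F : α → FixedInterval}
    (h : ∀ a ∈ l, f a ∈ F a) : (l.map f).prod ∈ prod l F := by
  induction l with
  | nil => exact_mod_cast mem_ofNat 1
  | cons a l ih =>
    rw [List.forall_mem_cons] at h
    simpa [prod] using mem_mul h.1 (ih h.2)

lemma mem_horner {c : ℕ → ℝ} {r : ℝ} {C : ℕ → FixedInterval} {R : FixedInterval}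
    (hc : ∀ i, c i ∈ C i) (hr : r ∈ R) (hx : x ∈ I) (n : ℕ) :
    ∑ i ∈ Finset.range n, c i * x ^ i + x ^ n * r ∈ horner C R I n := by
  induction n generalizing r R with
  | zero => simpa [horner] using hr
  | succ n ih =>
    rw [Finset.sum_range_succ, add_assoc, pow_succ, mul_comm (c n), mul_assoc, ← mul_add]
    exact ih (mem_add (hc n) (mem_mul hx hr))

lemma exists_mem_horner_eq_mul {c : ℕ → ℝ} {z : ℝ} {b : ℕ} {C : ℕ → FixedInterval}
    (hc : ∀ i, c i ∈ C i) (hx : x ∈ I) (hz : 0 ≤ z) (n : ℕ)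
    (hle : z * ∑ i ∈ Finset.range n, c i * x ^ i ≤ y)
    (hge : y ≤ z * (∑ i ∈ Finset.range n, c i * x ^ i + x ^ n * (b / unit))) :
    ∃ w ∈ horner C ⟨0, b⟩ I n, y = z * w := by
  set S := ∑ i ∈ Finset.range n, c i * x ^ i
  obtain ⟨r, hr, hy⟩ : ∃ r ∈ (⟨0, b⟩ : FixedInterval), y = z * (S + x ^ n * r) := by
    rcases (mul_nonneg hz (pow_nonneg (nonneg_of_mem hx) n)).eq_or_lt with h0 | hpos
    · rw [mul_add, ← mul_assoc, ← h0, zero_mul, add_zero] at hge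
      exact ⟨0, by simp [mem_def], by rw [mul_zero, add_zero, hge.antisymm hle]⟩
    · refine ⟨(y - z * S) / (z * x ^ n), ⟨?_, ?_⟩, ?_⟩
      · rw [Nat.cast_zero]
        have := sub_nonneg.2 hle
        have := unit_pos
        positivity
      · rw [← le_div_iff₀ unit_pos, div_le_iff₀ hpos]
        linarith
      · rw [mul_add, ← mul_assoc, mul_div_cancel₀ _ hpos.ne']
        ring
  exact ⟨_, mem_horner hc hr hx n, hy⟩

end FixedInterval

end IntervalArithmetic

section IntervalFunctions

namespace FixedInterval

/-- An enclosure of `exp (-x)` for `0 ≤ x`: the twelfth Taylor polynomial is applied to `x / 64`,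
and its value is squared six times. -/
def expNeg (I : FixedInterval) : FixedInterval :=
  if I.hi ≤ 64 * unit then
    let E := horner (fun i ↦ divNat (ofNat 1) i.factorial) ⟨0, unit / 2 ^ 28⟩ (divNat I 64) 12
    inv ((fun J ↦ mul J J)^[6] E)
  else ⟨0, unit⟩

/-- An enclosure of `log x` for `1 ≤ x`, accurate for `x ≤ 2`: the series of `artanh` is
applied to `(x - 1) / (x + 1)`. -/
def logReduced (I : FixedInterval) : FixedInterval :=
  if I.hi ≤ 3 * unit then
    let Z := mul (sub I (ofNat 1)) (inv (add I (ofNat 1)))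
    nsmul 2 (mul Z (horner (fun i ↦ divNat (ofNat 1) (2 * i + 1)) ⟨0, 2 * unit⟩ (mul Z Z) 14))
  else ⟨0, I.hi⟩

/-- An enclosure of `log x = k * log 2 + log (x / 2 ^ k)` for `1 ≤ x`, where `2 ^ k` is the largest
power of `2` below the interval. -/
def log (I : FixedInterval) : FixedInterval :=
  let k := (I.lo / unit).log2
  add (nsmul k (logReduced (ofNat 2))) (logReduced (divNat I (2 ^ k)))

/-- An enclosure of `x ^ (-s)` for `1 ≤ x` and `0 ≤ s`. -/
def rpowNeg (I S : FixedInterval) : FixedInterval := expNeg (mul (log I) S)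

variable {x s : ℝ} {I S : FixedInterval}

lemma exp_mem_horner (hx : x ∈ I) (h1 : x ≤ 1) :
    Real.exp x ∈ horner (fun i ↦ divNat (ofNat 1) i.factorial) ⟨0, unit / 2 ^ 28⟩ I 12 := by
  have hx0 := nonneg_of_mem hx
  have hsum : ∑ i ∈ Finset.range 12, ((1 : ℕ) : ℝ) / i.factorial * x ^ i =
      ∑ i ∈ Finset.range 12, x ^ i / i.factorial :=
    Finset.sum_congr rfl fun i _ ↦ by rw [Nat.cast_one, one_div_mul_eq_div]
  have hrem : (((12 : ℕ) : ℝ) + 1) / ((12 : ℕ).factorial * (12 : ℕ)) ≤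
      ((unit / 2 ^ 28 : ℕ) : ℝ) / unit := by
    norm_num [Nat.factorial, unit]
  obtain ⟨w, hw, hexp⟩ := exists_mem_horner_eq_mul (y := Real.exp x) (b := unit / 2 ^ 28)
    (fun i ↦ mem_divNat (mem_ofNat 1) i.factorial) hx zero_le_one 12
    (by rw [hsum, one_mul]; exact sum_le_exp_of_nonneg hx0 12) <| by
      rw [hsum, one_mul]
      refine (exp_bound' hx0 h1 (n := 12) (by norm_num)).trans ?_
      rw [mul_div_assoc]
      gcongr
  rwa [hexp, one_mul]

lemma pow_two_pow_mem_iterate (hx : x ∈ I) (n : ℕ) :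
    x ^ 2 ^ n ∈ (fun J ↦ mul J J)^[n] I := by
  induction n with
  | zero => simpa using hx
  | succ n ih =>
    rw [Function.iterate_succ_apply', pow_succ, pow_mul, sq]
    exact mem_mul ih ih

lemma exp_neg_mem (hx : x ∈ I) : Real.exp (-x) ∈ expNeg I := by
  have hx0 := nonneg_of_mem hx
  rw [expNeg]
  split_ifs with h
  · have h64 : x ≤ 64 := by
      have : x * unit ≤ 64 * unit := hx.2.trans (by exact_mod_cast h)
      exact le_of_mul_le_mul_right this unit_pos
    have hexp : Real.exp (x / (64 : ℕ)) ^ 2 ^ 6 = Real.exp x := by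
      rw [← exp_nat_mul]
      congr 1
      norm_num
      ring
    rw [exp_neg, ← hexp]
    refine mem_inv (pow_two_pow_mem_iterate ?_ 6) (one_le_pow₀ (one_le_exp (by positivity)))
    exact exp_mem_horner (mem_divNat hx 64) (by norm_num; linarith)
  · refine ⟨by simpa using mul_nonneg (exp_pos _).le unit_pos.le, ?_⟩
    exact mul_le_of_le_one_left unit_pos.le (exp_le_one_iff.2 (neg_nonpos.2 hx0))

lemma artanh_mem_mul_horner (hx : x ∈ I) (h : x ≤ 1 / 2) :
    artanh x ∈
      mul I (horner (fun i ↦ divNat (ofNat 1) (2 * i + 1)) ⟨0, 2 * unit⟩ (mul I I) 14) := by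
  have hx0 := nonneg_of_mem hx
  have h1 : x < 1 := by linarith
  have hsum : x * ∑ i ∈ Finset.range 14, ((1 : ℕ) : ℝ) / (2 * i + 1 : ℕ) * (x * x) ^ i =
      ∑ i ∈ Finset.range 14, x ^ (2 * i + 1) / (2 * i + 1) := by
    rw [Finset.mul_sum]
    refine Finset.sum_congr rfl fun i _ ↦ ?_
    push_cast
    ring
  have hrem : (1 - x ^ 2)⁻¹ ≤ ((2 * unit : ℕ) : ℝ) / unit := by
    rw [Nat.cast_mul, mul_div_cancel_right₀ _ unit_pos.ne']
    refine inv_le_of_inv_le₀ two_pos ?_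
    push_cast
    nlinarith
  have hartanh : artanh x = 1 / 2 * Real.log ((1 + x) / (1 - x)) :=
    artanh_eq_half_log ⟨by linarith, h1.le⟩
  obtain ⟨w, hw, hxw⟩ := exists_mem_horner_eq_mul (y := artanh x) (b := 2 * unit)
    (fun i ↦ mem_divNat (mem_ofNat 1) (2 * i + 1)) (mem_mul hx hx) hx0 14
    (by rw [hsum, hartanh]; exact sum_range_le_log_div hx0 h1 14) <| by
      rw [mul_add, hsum, hartanh]
      refine (log_div_le_sum_range_add hx0 h1 14).trans ?_
      rw [div_eq_mul_inv, ← sq, ← pow_mul, pow_succ' x, mul_assoc]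
      gcongr
  exact hxw ▸ mem_mul hx hw

lemma log_mem_logReduced (hx : x ∈ I) (h1 : 1 ≤ x) : Real.log x ∈ logReduced I := by
  rw [logReduced]
  split_ifs with h
  · have h3 : x ≤ 3 := by
      have : x * unit ≤ 3 * unit := hx.2.trans (by exact_mod_cast h)
      exact le_of_mul_le_mul_right this unit_pos
    have hz : (x - (1 : ℕ)) * (x + (1 : ℕ))⁻¹ ∈ mul (sub I (ofNat 1)) (inv (add I (ofNat 1))) :=
      mem_mul (mem_sub hx (mem_ofNat 1) (by simpa))
        (mem_inv (mem_add hx (mem_ofNat 1)) (by push_cast; linarith))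
    rw [Nat.cast_one, ← div_eq_mul_inv] at hz
    have hz2 : (x - 1) / (x + 1) ≤ 1 / 2 := by
      rw [div_le_div_iff₀ (by linarith) two_pos]
      linarith
    have hlog : Real.log x = (2 : ℕ) * artanh ((x - 1) / (x + 1)) := by
      rw [artanh_eq_half_log ⟨by linarith [nonneg_of_mem hz], by linarith⟩]
      have : (1 + (x - 1) / (x + 1)) / (1 - (x - 1) / (x + 1)) = x := by
        have : x + 1 ≠ 0 := by linarith
        field_simp
        ring
      rw [this]
      push_cast
      ring
    rw [hlog]
    exact mem_nsmul 2 (artanh_mem_mul_horner hz hz2)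
  · refine ⟨by simpa using mul_nonneg (log_nonneg h1) unit_pos.le, le_trans ?_ hx.2⟩
    exact mul_le_mul_of_nonneg_right (log_le_self (by linarith)) unit_pos.le

lemma log_mem (hx : x ∈ I) (h1 : 1 ≤ x) : Real.log x ∈ log I := by
  set k := (I.lo / unit).log2
  have hpow : ((2 ^ k : ℕ) : ℝ) ≤ x := by
    rcases eq_or_ne (I.lo / unit) 0 with h0 | h0
    · simpa [k, h0] using h1
    · calc ((2 ^ k : ℕ) : ℝ) ≤ (I.lo / unit : ℕ) := Nat.cast_le.2 (Nat.log2_self_le h0)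
        _ ≤ I.lo / unit := Nat.cast_div_le
        _ ≤ x := (div_le_iff₀ unit_pos).2 hx.1
  have h2 : (0 : ℝ) < (2 ^ k : ℕ) := by positivity
  have hlog : Real.log x = k * Real.log (2 : ℕ) + Real.log (x / (2 ^ k : ℕ)) := by
    rw [log_div (by linarith) h2.ne', Nat.cast_pow, log_pow]
    ring
  rw [hlog]
  exact mem_add (mem_nsmul k (log_mem_logReduced (mem_ofNat 2) (by norm_num)))
    (log_mem_logReduced (mem_divNat hx _) ((one_le_div h2).2 hpow))

lemma rpow_neg_mem (hx : x ∈ I) (hs : s ∈ S) (h1 : 1 ≤ x) : x ^ (-s) ∈ rpowNeg I S := by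
  rw [rpow_def_of_pos (by linarith), mul_neg]
  exact exp_neg_mem (mem_mul (log_mem hx h1) hs)

end FixedInterval

end IntervalFunctions

section Enclosures

namespace FixedInterval

/-- An enclosure of `realZeta s` for `1 < s`, where `X n` encloses `(n + 1) ^ (-s)`. -/
def zeta (s : ℚ) (X : ℕ → FixedInterval) (m : ℕ) : FixedInterval :=
  let head := sum (List.range m) X
  let C := ofRat (1 / (s - 1))
  ⟨(add head (add (divNat (X m) 2) (mul (nsmul (m + 1) (X m)) C))).lo,
    (add head (mul (rpowNeg (ofRat (m + 1 / 2)) (ofRat (s - 1))) C)).hi⟩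

/-- An enclosure of `eulerQuotient N s` for `1 < s`, where `primes` lists the primes below `N` and
both zeta values are enclosed using `m` terms. -/
def eulerQuotient (primes : List ℕ) (m : ℕ) (s : ℚ) : FixedInterval :=
  let X n := rpowNeg (ofNat n) (ofRat s)
  let Z := zeta s (fun n ↦ X (n + 1)) m
  let Z' := zeta (2 * s) (fun n ↦ mul (X (n + 1)) (X (n + 1))) m
  mul (mul (mul Z Z) (inv Z')) (prod primes fun p ↦ mul (sub (ofNat 1) (X p))
    (inv (add (ofNat 1) (X p))))

/-- The part of the interval to the right of `1`. -/
def restrictGeOne (I : FixedInterval) : FixedInterval := ⟨max I.lo unit, I.hi⟩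

/-- An enclosure of `eulerTail N s`, with `primes` and `m` as in `FixedInterval.eulerQuotient`. -/
def eulerTail (primes : List ℕ) (m : ℕ) (s : ℚ) : FixedInterval :=
  divNat (log (restrictGeOne (eulerQuotient primes m s))) 2

/-- An enclosure of `∑ p ∈ primes, 1 / (p * (log p + t))`. -/
def headSum (primes : List ℕ) (t : ℚ) : FixedInterval :=
  sum primes fun p ↦ inv (nsmul p (add (log (ofNat p)) (ofRat t)))

/-- An enclosure of the value of the rule `L` on `fun v ↦ exp (-(t * v)) * eulerTail N (1 + v)`,
with `primes` and `m` as in `FixedInterval.eulerQuotient`. -/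
def evalTail (primes : List ℕ) (m : ℕ) (L : QuadRule) (t : ℚ) : FixedInterval :=
  sum L fun q ↦ mul (ofRat q.1)
    (mul (expNeg (mul (ofRat t) (ofRat q.2))) (eulerTail primes m (1 + q.2)))

variable {s t : ℚ} {m N : ℕ} {X : ℕ → FixedInterval} {primes : List ℕ} {L : QuadRule}

lemma mem_sum_range {f : ℕ → ℝ} (hX : ∀ n ≤ m, f (n + 1) ∈ X n) (h0 : f 0 = 0) :
    ∑ n ∈ Finset.range (m + 1), f n ∈ sum (List.range m) X := by
  have hsum : ∑ n ∈ Finset.range (m + 1), f n =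
      ((List.range m).map fun n ↦ f (n + 1)).sum := by
    rw [Finset.sum_range_succ', h0, add_zero]
    rfl
  exact hsum ▸ mem_sum fun n hn ↦ hX n (List.mem_range.1 hn).le

lemma mem_zeta (hs : 1 < s) (hm : 1 ≤ m)
    (hX : ∀ n ≤ m, ((n + 1 : ℕ) : ℝ) ^ (-(s : ℝ)) ∈ X n) : realZeta s ∈ zeta s X m := by
  have hs' : (1 : ℝ) < s := by exact_mod_cast hs
  have hm' : (1 : ℚ) ≤ m := by exact_mod_cast hm
  have hhead := mem_sum_range (f := fun n ↦ (n : ℝ) ^ (-(s : ℝ))) hX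
    (by rw [Nat.cast_zero, zero_rpow (by linarith)])
  have hC : ((1 / (s - 1) : ℚ) : ℝ) ∈ ofRat (1 / (s - 1)) :=
    mem_ofRat (one_div_nonneg.2 (sub_nonneg.2 hs.le))
  have hhalf : ((m + 1 / 2 : ℚ) : ℝ) ^ (-((s - 1 : ℚ) : ℝ)) ∈
      rpowNeg (ofRat (m + 1 / 2)) (ofRat (s - 1)) :=
    rpow_neg_mem (mem_ofRat (by positivity)) (mem_ofRat (sub_nonneg.2 hs.le))
      (by exact_mod_cast (by linarith : (1 : ℚ) ≤ m + 1 / 2))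
  constructor
  · have := (mem_add hhead (mem_add (mem_divNat (hX m le_rfl) 2)
      (mem_mul (mem_nsmul (m + 1) (hX m le_rfl)) hC))).1
    refine this.trans (mul_le_mul_of_nonneg_right (le_trans (le_of_eq ?_)
      (le_realZeta hs' m.succ_pos)) unit_pos.le)
    have hpow : ((m + 1 : ℕ) : ℝ) ^ (1 - (s : ℝ)) =
        ((m + 1 : ℕ) : ℝ) * ((m + 1 : ℕ) : ℝ) ^ (-(s : ℝ)) := by
      rw [sub_eq_add_neg, rpow_add (by positivity), rpow_one]
    rw [hpow]
    push_cast
    ring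
  · refine le_trans (mul_le_mul_of_nonneg_right ((realZeta_le hs' m.succ_pos).trans_eq ?_)
      unit_pos.le) (mem_add hhead (mem_mul hhalf hC)).2
    push_cast
    rw [show (m : ℝ) + 1 - 1 / 2 = m + 1 / 2 by ring, neg_sub]
    ring

lemma rpow_neg_mem_ofNat {n : ℕ} (hn : 1 ≤ n) (hs : 0 ≤ s) :
    (n : ℝ) ^ (-(s : ℝ)) ∈ rpowNeg (ofNat n) (ofRat s) :=
  rpow_neg_mem (mem_ofNat n) (mem_ofRat hs) (by exact_mod_cast hn)

lemma one_sub_div_one_add_mem {x : ℝ} {I : FixedInterval} (hx : x ∈ I) (h1 : x ≤ 1) :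
    (1 - x) / (1 + x) ∈ mul (sub (ofNat 1) I) (inv (add (ofNat 1) I)) := by
  have hone : (1 : ℝ) ∈ ofNat 1 := by exact_mod_cast mem_ofNat 1
  exact mem_mul (mem_sub hone hx h1) (mem_inv (mem_add hone hx) (by linarith [nonneg_of_mem hx]))

lemma mem_restrictGeOne {x : ℝ} {I : FixedInterval} (hx : x ∈ I) (h1 : 1 ≤ x) :
    x ∈ restrictGeOne I := by
  refine ⟨?_, hx.2⟩
  rw [restrictGeOne, Nat.cast_max]
  exact max_le hx.1 (le_mul_of_one_le_left unit_pos.le h1)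

lemma mem_zeta_two_mul (hs : 1 < s) (hm : 1 ≤ m)
    (hX : ∀ n ≤ m, ((n + 1 : ℕ) : ℝ) ^ (-(s : ℝ)) ∈ X n) :
    realZeta (2 * s) ∈ zeta (2 * s) (fun n ↦ mul (X n) (X n)) m := by
  have hsq : ∀ n ≤ m, ((n + 1 : ℕ) : ℝ) ^ (-((2 * s : ℚ) : ℝ)) ∈ mul (X n) (X n) := fun n hn ↦ by
    rw [show -((2 * s : ℚ) : ℝ) = -s + -s by push_cast; ring, rpow_add (by positivity)]
    exact mem_mul (hX n hn) (hX n hn)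
  exact_mod_cast mem_zeta (by linarith) hm hsq

lemma prod_one_sub_div_one_add_mem (hs : 1 < s) (hprimes : N.primesBelow = primes.toFinset)
    (hnodup : primes.Nodup) :
    ∏ p ∈ N.primesBelow, (1 - (p : ℝ) ^ (-(s : ℝ))) / (1 + (p : ℝ) ^ (-(s : ℝ))) ∈
      prod primes fun p ↦ mul (sub (ofNat 1) (rpowNeg (ofNat p) (ofRat s)))
        (inv (add (ofNat 1) (rpowNeg (ofNat p) (ofRat s)))) := by
  rw [hprimes, List.prod_toFinset _ hnodup]
  refine mem_prod fun p hp ↦ ?_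
  have hp' : p.Prime := Nat.prime_of_mem_primesBelow (hprimes ▸ List.mem_toFinset.2 hp)
  exact one_sub_div_one_add_mem (rpow_neg_mem_ofNat hp'.one_le (by linarith))
    (rpow_neg_lt_one hp'.two_le (by exact_mod_cast zero_lt_one.trans hs)).le

lemma eulerQuotient_mem (hs : 1 < s) (hm : 1 ≤ m) (hprimes : N.primesBelow = primes.toFinset)
    (hnodup : primes.Nodup) : _root_.eulerQuotient N s ∈ eulerQuotient primes m s := by
  have hX (n : ℕ) (_ : n ≤ m) :
      ((n + 1 : ℕ) : ℝ) ^ (-(s : ℝ)) ∈ rpowNeg (ofNat (n + 1)) (ofRat s) :=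
    rpow_neg_mem_ofNat n.succ_pos (by linarith)
  have hZ := mem_zeta hs hm hX
  have hZ' := mem_inv (mem_zeta_two_mul hs hm hX)
    (one_le_realZeta (by exact_mod_cast (by linarith : 1 < 2 * s)))
  rw [_root_.eulerQuotient, sq, div_eq_mul_inv, eulerQuotient]
  exact mem_mul (mem_mul (mem_mul hZ hZ) hZ') (prod_one_sub_div_one_add_mem hs hprimes hnodup)

lemma eulerTail_mem (hs : 1 < s) (hm : 1 ≤ m) (hprimes : N.primesBelow = primes.toFinset)
    (hnodup : primes.Nodup) : _root_.eulerTail N s ∈ eulerTail primes m s := by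
  have h1 : 1 ≤ _root_.eulerQuotient N s := one_le_eulerQuotient (by exact_mod_cast hs) N
  have hlog := log_mem (mem_restrictGeOne (eulerQuotient_mem hs hm hprimes hnodup) h1) h1
  rw [_root_.eulerTail, one_div_mul_eq_div]
  exact mem_divNat hlog 2

lemma headSum_mem (ht : 0 ≤ t) (hprimes : N.primesBelow = primes.toFinset)
    (hnodup : primes.Nodup) :
    ∑ p ∈ N.primesBelow, 1 / ((p : ℝ) * (Real.log p + t)) ∈ headSum primes t := by
  rw [hprimes, List.sum_toFinset _ hnodup]
  refine mem_sum fun p hp ↦ ?_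
  have hp' : p.Prime := Nat.prime_of_mem_primesBelow (hprimes ▸ List.mem_toFinset.2 hp)
  have h1 : (1 : ℝ) ≤ p := by exact_mod_cast hp'.one_le
  rw [one_div]
  refine mem_inv (mem_nsmul p (mem_add (log_mem (mem_ofNat p) h1) (mem_ofRat ht))) ?_
  have h2 : (2 : ℝ) ≤ p := by exact_mod_cast hp'.two_le
  have ht' : (0 : ℝ) ≤ t := by exact_mod_cast ht
  calc (1 : ℝ) ≤ p * (1 - (p : ℝ)⁻¹) := by rw [mul_one_sub, mul_inv_cancel₀ (by linarith)]; linarith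
    _ ≤ p * (Real.log p + t) := by
      gcongr
      linarith [one_sub_inv_le_log_of_pos (by linarith : (0 : ℝ) < p)]

lemma eval_mem_evalTail (hL : ∀ q ∈ L, 0 ≤ q.1 ∧ 0 < q.2) (ht : 0 ≤ t) (hm : 1 ≤ m)
    (hprimes : N.primesBelow = primes.toFinset) (hnodup : primes.Nodup) :
    L.eval (fun v ↦ exp (-(t * v)) * _root_.eulerTail N (1 + v)) ∈ evalTail primes m L t := by
  refine mem_sum fun q hq ↦ mem_mul (mem_ofRat (hL q hq).1) (mem_mul ?_ ?_)
  · exact exp_neg_mem (mem_mul (mem_ofRat ht) (mem_ofRat (hL q hq).2.le))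
  · have := eulerTail_mem (s := 1 + q.2) (by linarith [(hL q hq).2]) hm hprimes hnodup
    exact_mod_cast this

end FixedInterval

end Enclosures

section NumericalBounds

namespace QuadRule

variable {u : ℕ → ℚ} {L : QuadRule} {y : ℝ} {N : ℕ}

lemma eval_composite_gaussPanel_exp_le (hu : Monotone u) (h0 : u 0 = 0) (hy : 0 < y) (K : ℕ) :
    eval (composite gaussPanel u K) (fun v ↦ exp (-(y * v))) ≤ 1 / y := by
  refine (eval_composite_le hu (eval_gaussPanel_exp_le hy) K).trans ?_
  rw [h0, Rat.cast_zero, mul_zero, neg_zero, exp_zero]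
  exact sub_le_self _ (by positivity)

lemma one_div_le_add_eval_composite_simpsonPanel_exp (hu : Monotone u) (hy : 1 ≤ y) (K : ℕ) :
    1 / y ≤ (1 - exp (-(y * u 0))) / y +
      eval ((1, u K) :: composite simpsonPanel u K) (fun v ↦ exp (-(y * v))) := by
  have hpanels := le_eval_composite hu (le_eval_simpsonPanel_exp (by linarith : 0 < y)) K
  have hend : exp (-(y * u K)) / y ≤ exp (-(y * u K)) := div_le_self (exp_pos _).le hy
  rw [eval_cons, Rat.cast_one, one_mul, sub_div]
  linarith

lemma eval_tsum_le_eval_eulerTail (hL : ∀ q ∈ L, 0 ≤ q.1 ∧ 0 < q.2) (t : ℝ) (N : ℕ) :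
    L.eval (fun v ↦ exp (-(t * v)) * ∑' p : primesGE N, (p.1 : ℝ) ^ (-(1 + v))) ≤
      L.eval (fun v ↦ exp (-(t * v)) * eulerTail N (1 + v)) :=
  eval_mono (fun q hq ↦ (hL q hq).1) fun q hq ↦ mul_le_mul_of_nonneg_left
    (tsum_primesGE_rpow_neg_le_eulerTail
      (lt_add_of_pos_right 1 (Rat.cast_pos.2 (hL q hq).2)) N) (exp_pos _).le

lemma eval_eulerTail_le (hL : ∀ q ∈ L, 0 ≤ q.1 ∧ 0 < q.2) (t : ℝ) (hN : 2 ≤ N) :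
    L.eval (fun v ↦ exp (-(t * v)) * eulerTail N (1 + v)) ≤
      (1 + (1 / N) ^ 2 / 3 + (1 / N) ^ 4 / (1 - (1 / N) ^ 2)) *
        L.eval (fun v ↦ exp (-(t * v)) * ∑' p : primesGE N, (p.1 : ℝ) ^ (-(1 + v))) := by
  rw [← eval_const_mul]
  refine eval_mono (fun q hq ↦ (hL q hq).1) fun q hq ↦ ?_
  rw [mul_left_comm]
  exact mul_le_mul_of_nonneg_left
    (eulerTail_le (lt_add_of_pos_right 1 (Rat.cast_pos.2 (hL q hq).2)) hN) (exp_pos _).le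

end QuadRule

namespace FixedInterval

variable {x : ℝ} {I : FixedInterval}

lemma one_lt_of_mem (hx : x ∈ I) (h : unit < I.lo) : 1 < x := by
  have : (unit : ℝ) < x * unit := (Nat.cast_lt.2 h).trans_le hx.1
  exact (lt_mul_iff_one_lt_left unit_pos).1 this

lemma lt_one_of_mem (hx : x ∈ I) (h : I.hi < unit) : x < 1 := by
  have : x * unit < unit := hx.2.trans_lt (Nat.cast_lt.2 h)
  exact (mul_lt_iff_lt_one_left unit_pos).1 this

end FixedInterval

/-- The primes below `128`. -/
def smallPrimes : List ℕ :=
  [2, 3, 5, 7, 11, 13, 17, 19, 23, 29, 31, 37, 41, 43, 47, 53, 59, 61, 67, 71, 73, 79, 83, 89, 97,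
    101, 103, 107, 109, 113, 127]

/-- The grid for the quadrature rules; it is refined near `0`, where the prime zeta function
`P(1 + v)` has a logarithmic singularity. -/
def breakpoint (k : ℕ) : ℚ := k ^ 5 / 2 ^ 26

/-- The rule for the lower bound at `t = 0.8035`. -/
def lowerRule : QuadRule := QuadRule.composite QuadRule.gaussPanel breakpoint 42

/-- The rule for the upper bound at `t = 0.8036`. It omits the interval `[0, breakpoint 1]`, and its
first node accounts for `[breakpoint 41, ∞)`. -/
def upperRule : QuadRule :=
  (1, breakpoint 41) :: QuadRule.composite QuadRule.simpsonPanel (fun k ↦ breakpoint (k + 1)) 40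

lemma monotone_breakpoint : Monotone breakpoint := fun a b hab ↦ by
  unfold breakpoint
  gcongr

lemma primesBelow_eq_smallPrimes : Nat.primesBelow 128 = smallPrimes.toFinset := by
  decide +kernel

lemma nodup_smallPrimes : smallPrimes.Nodup := by decide +kernel

lemma lowerRule_pos : ∀ q ∈ lowerRule, 0 ≤ q.1 ∧ 0 < q.2 := by decide +kernel

lemma upperRule_pos : ∀ q ∈ upperRule, 0 ≤ q.1 ∧ 0 < q.2 := by decide +kernel

open FixedInterval in
lemma unit_lt_lo_enclosure_lowerRule :
    unit < (add (headSum smallPrimes (8035 / 10000))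
      (mul (ofRat (49000 / 49001)) (evalTail smallPrimes 48 lowerRule (8035 / 10000)))).lo := by
  decide +kernel

open FixedInterval in
lemma hi_enclosure_upperRule_lt_unit :
    (add (headSum smallPrimes (8036 / 10000)) (add (ofRat (20 / 2 ^ 26))
      (evalTail smallPrimes 48 upperRule (8036 / 10000)))).hi < unit := by
  decide +kernel

open FixedInterval in
lemma one_lt_sum_add_eval_lowerRule :
    1 < ∑ p ∈ Nat.primesBelow 128, 1 / ((p : ℝ) * (Real.log p + 0.8035)) +
      49000 / 49001 *
        lowerRule.eval fun v ↦ exp (-(0.8035 * v)) * _root_.eulerTail 128 (1 + v) := by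
  have ht : (0 : ℚ) ≤ 8035 / 10000 := by norm_num
  have hratio : (0 : ℚ) ≤ 49000 / 49001 := by norm_num
  have hhead := headSum_mem ht primesBelow_eq_smallPrimes nodup_smallPrimes
  have htail := eval_mem_evalTail lowerRule_pos ht (by norm_num : 1 ≤ 48)
    primesBelow_eq_smallPrimes nodup_smallPrimes
  have h := one_lt_of_mem (mem_add hhead (mem_mul (mem_ofRat hratio) htail))
    unit_lt_lo_enclosure_lowerRule
  rwa [show ((8035 / 10000 : ℚ) : ℝ) = 0.8035 by norm_num,
    show ((49000 / 49001 : ℚ) : ℝ) = 49000 / 49001 by norm_num] at h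

open FixedInterval in
lemma sum_add_eval_upperRule_lt_one :
    ∑ p ∈ Nat.primesBelow 128, 1 / ((p : ℝ) * (Real.log p + 0.8036)) + (20 / 2 ^ 26 +
      upperRule.eval fun v ↦ exp (-(0.8036 * v)) * _root_.eulerTail 128 (1 + v)) < 1 := by
  have ht : (0 : ℚ) ≤ 8036 / 10000 := by norm_num
  have hsmall : (0 : ℚ) ≤ 20 / 2 ^ 26 := by norm_num
  have hhead := headSum_mem ht primesBelow_eq_smallPrimes nodup_smallPrimes
  have htail := eval_mem_evalTail upperRule_pos ht (by norm_num : 1 ≤ 48)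
    primesBelow_eq_smallPrimes nodup_smallPrimes
  have h := lt_one_of_mem (mem_add hhead (mem_add (mem_ofRat hsmall) htail))
    hi_enclosure_upperRule_lt_unit
  rwa [show ((8036 / 10000 : ℚ) : ℝ) = 0.8036 by norm_num,
    show ((20 / 2 ^ 26 : ℚ) : ℝ) = 20 / 2 ^ 26 by norm_num] at h

theorem one_lt_transSum_primes : 1 < transSum {p | p.Prime} 0.8035 := by
  have hlog : -log 2 < 0.8035 := by linarith [log_pos one_lt_two]
  have htail := QuadRule.eval_le_transSum_primesGE (fun q hq ↦ (lowerRule_pos q hq).2)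
    (fun y hy ↦ QuadRule.eval_composite_gaussPanel_exp_le monotone_breakpoint
      (by norm_num [breakpoint]) hy 42) hlog 128
  have hnonneg : 0 ≤ transSum (primesGE 128) 0.8035 := tsum_nonneg fun p ↦
    one_div_nonneg.2 (mul_nonneg p.1.cast_nonneg (log_add_pos p.2.1.two_le hlog).le)
  have hEuler : lowerRule.eval (fun v ↦ exp (-(0.8035 * v)) * eulerTail 128 (1 + v)) ≤
      49001 / 49000 * transSum (primesGE 128) 0.8035 :=
    (QuadRule.eval_eulerTail_le lowerRule_pos 0.8035 (by norm_num : 2 ≤ 128)).trans <|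
      (mul_le_mul_of_nonneg_left htail (by norm_num)).trans <|
        mul_le_mul_of_nonneg_right (by norm_num) hnonneg
  rw [transSum_primes_eq_sum_add hlog 128]
  linarith [one_lt_sum_add_eval_lowerRule]

lemma sq_div_two_mul_log_two_add_sub_mul_log_le :
    (2⁻¹ ^ 26 : ℝ) ^ 2 / 2 * log 2 + 2⁻¹ ^ 26 - 2⁻¹ ^ 26 * log (2⁻¹ ^ 26) ≤ 20 / 2 ^ 26 := by
  rw [log_pow, log_inv]
  push_cast
  linarith [log_two_lt_d9]

theorem transSum_primes_lt_one : transSum {p | p.Prime} 0.8036 < 1 := by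
  have htail := QuadRule.transSum_primesGE_le_eval_add (fun q hq ↦ (upperRule_pos q hq).2)
    (fun y hy ↦ QuadRule.one_div_le_add_eval_composite_simpsonPanel_exp
      (fun _ _ hab ↦ monotone_breakpoint (Nat.succ_le_succ hab)) hy 40)
    (by norm_num : (0 : ℝ) ≤ 0.8036) (by norm_num [breakpoint]) (by norm_num : 3 ≤ 128)
  have hEuler := QuadRule.eval_tsum_le_eval_eulerTail upperRule_pos 0.8036 128
  rw [show ((breakpoint (0 + 1) : ℚ) : ℝ) = 2⁻¹ ^ 26 by norm_num [breakpoint]] at htail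
  rw [transSum_primes_eq_sum_add (by linarith [log_pos one_lt_two]) 128]
  linarith [sum_add_eval_upperRule_lt_one, sq_div_two_mul_log_two_add_sub_mul_log_le]

end NumericalBounds

theorem stmt_2_general : ∃ t : ℝ, 0.8035 < t ∧ t < 0.8036 ∧ ∀ u : ℝ, -log 2 < u →
    ((∫ s in Set.Ioi (1 : ℝ), primeZeta s * exp ((1 - s) * u)) = 1 ↔ u = t) := by
  have hprime : ∀ p ∈ {p : ℕ | p.Prime}, 2 ≤ p := fun _ hp ↦ Nat.Prime.two_le hp
  have hsum := summable_primes_one_div_mul_log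
  have hlog : -log 2 < 0.8035 := by linarith [log_pos one_lt_two]
  have hanti := transSum_strictAntiOn ⟨2, Nat.prime_two⟩ hprime hsum
  obtain ⟨t, ⟨ht, ht'⟩, hroot⟩ := intermediate_value_Ioo' (by norm_num : (0.8035 : ℝ) ≤ 0.8036)
    ((continuousOn_transSum hprime hsum hlog).mono Set.Icc_subset_Ici_self)
    ⟨transSum_primes_lt_one, one_lt_transSum_primes⟩
  refine ⟨t, ht, ht', fun u hu ↦ ?_⟩
  have hint : ∫ s in Set.Ioi (1 : ℝ), primeZeta s * exp ((1 - s) * u) =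
      transSum {p | p.Prime} u := integral_tsum_rpow_neg_mul_exp hprime hsum hu
  rw [hint, ← hroot]
  exact hanti.injOn.eq_iff hu (hlog.trans ht)

/-- There exists a unique real `t ≥ 0` with `∫₁^∞ P(s) e^{(1−s)t} ds = 1`,
and it lies in `(0.8035, 0.8036)`. -/
theorem stmt_2 :
    (∃! t : ℝ, 0 ≤ t ∧
      (∫ s in Set.Ioi (1:ℝ), primeZeta s * Real.exp ((1 - s) * t)) = 1) ∧
    (∀ t : ℝ, 0 ≤ t →
      (∫ s in Set.Ioi (1:ℝ), primeZeta s * Real.exp ((1 - s) * t)) = 1 →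
      0.8035 < t ∧ t < 0.8036) := by
  obtain ⟨t, hlow, hhigh, hroot⟩ := stmt_2_general
  have hdom {u : ℝ} (hu : 0 ≤ u) : -Real.log 2 < u := by linarith [Real.log_pos one_lt_two]
  have ht : 0 ≤ t := by linarith
  exact ⟨⟨t, ⟨ht, (hroot t (hdom ht)).2 rfl⟩, fun u hu ↦ (hroot u (hdom hu.1)).1 hu.2⟩,
    fun u hu hint ↦ (hroot u (hdom hu)).1 hint ▸ ⟨hlow, hhigh⟩⟩
end

section
/- Let h∞ be the unique real t ≥ 0 satisfying ∫₁^∞ P(s) e^{(1−s)t} ds = 1. If h > h∞ then there exists K such that f(N₁, h) < f(N_k, h) for all integers k ≥ K; and if 0 ≤ h < h∞ then there exists K such that f(N₁, h) > f(N_k, h) for all integers k ≥ K. -/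
open MeasureTheory Real

/-!
For `h ≥ 0`, integrating `n ^ (-s) * exp ((1 - s) * h)` over `s > 1` gives
`f(N_k, h) = ∫₁^∞ P_k(s) e^{(1-s)h} ds`. Newton's identities factor the generating function of the
`P_k(s)` as `∑ P_k(s) z^k = exp (P(s) z) * ∑ g_i(s) z^i`, where `∑ g_i(s)` converges for `s ≥ 1`;
thus `P_k = ∑_{i+j=k} g_i P^j / j!`, and at `z = 1` this is `ζ(s) = e^{P(s)} G(s)` with
`G = ∑ g_i`. Hence `(s - 1) e^{P(s)} → 1 / G(1)`, so that `P(s)` behaves like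
`log ((1 / G(1)) / (s - 1))` near `s = 1` and `P(s)^j / j! ds` concentrates mass `1 / G(1)` at
`s = 1`. Summing over `i`, `P_k(s) ds` concentrates mass `∑ g_i(1) / G(1) = 1` at `s = 1`, and
`f(N_k, h) → 1` for every `h ≥ 0`, whereas `f(N₁, ·)` is strictly decreasing with value `1` at `h∞`.
-/

open Filter Topology
open Set (Ioc Ioi Ioo)
open Finset.HasAntidiagonal (antidiagonal)
open ArithmeticFunction (cardFactors)
open scoped ENNReal

/-- The coefficients of the power series `exp (∑ q i * X ^ (i + 1) / (i + 1))`, given by the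
recursion that follows from differentiating it. -/
noncomputable def expCoeff (q : ℕ → ℝ) : ℕ → ℝ
  | 0 => 1
  | n + 1 => (∑ j : Fin (n + 1), q (n - j) * expCoeff q j) / (n + 1)

section ExpCoeff

variable {q r : ℕ → ℝ}

@[simp] lemma expCoeff_zero (q : ℕ → ℝ) : expCoeff q 0 = 1 := by rw [expCoeff]

lemma expCoeff_succ (q : ℕ → ℝ) (n : ℕ) :
    expCoeff q (n + 1) = (∑ j ∈ Finset.range (n + 1), q (n - j) * expCoeff q j) / (n + 1) := by
  rw [expCoeff, Finset.sum_range]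

lemma succ_mul_expCoeff_succ (q : ℕ → ℝ) (n : ℕ) :
    (n + 1) * expCoeff q (n + 1) = ∑ ij ∈ antidiagonal n, q ij.1 * expCoeff q ij.2 := by
  rw [expCoeff_succ, mul_div_cancel₀ _ (by positivity), ← Finset.Nat.sum_antidiagonal_swap,
    Finset.Nat.sum_antidiagonal_eq_sum_range_succ_mk]
  rfl

lemma eq_expCoeff {x : ℕ → ℝ} (hx_zero : x 0 = 1)
    (hx_succ : ∀ n : ℕ, (n + 1) * x (n + 1) = ∑ ij ∈ antidiagonal n, q ij.1 * x ij.2) :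
    x = expCoeff q := by
  funext n
  induction n using Nat.strong_induction_on with
  | _ n ih =>
    cases n with
    | zero => rw [hx_zero, expCoeff_zero]
    | succ n =>
      refine mul_left_cancel₀ (by positivity : (n + 1 : ℝ) ≠ 0) ?_
      rw [hx_succ, succ_mul_expCoeff_succ]
      refine Finset.sum_congr rfl fun ij hij => ?_
      rw [ih ij.2 (Finset.Nat.antidiagonal.snd_lt hij)]

lemma derivative_mk_expCoeff (q : ℕ → ℝ) :
    PowerSeries.derivative ℝ (.mk (expCoeff q)) = .mk q * .mk (expCoeff q) := by
  ext n
  simp only [PowerSeries.coeff_derivative, PowerSeries.coeff_mul, PowerSeries.coeff_mk]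
  rw [mul_comm, succ_mul_expCoeff_succ]

lemma expCoeff_add (q r : ℕ → ℝ) (n : ℕ) :
    expCoeff (q + r) n = ∑ ij ∈ antidiagonal n, expCoeff q ij.1 * expCoeff r ij.2 := by
  set F : PowerSeries ℝ := .mk (expCoeff q) * .mk (expCoeff r) with hF
  have hF_deriv : PowerSeries.derivative ℝ F = .mk (q + r) * F := by
    have hmk : PowerSeries.mk (q + r) = .mk q + .mk r := by ext; simp
    rw [hF, Derivation.leibniz, derivative_mk_expCoeff, derivative_mk_expCoeff, hmk]
    simp only [smul_eq_mul]
    ring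
  have hF_coeff : (fun n => PowerSeries.coeff n F) = expCoeff (q + r) := by
    refine eq_expCoeff (by simp [hF]) fun n => ?_
    rw [mul_comm, ← PowerSeries.coeff_derivative, hF_deriv, PowerSeries.coeff_mul]
    simp only [PowerSeries.coeff_mk]
  rw [← hF_coeff]
  simp [hF, PowerSeries.coeff_mul]

lemma expCoeff_single_zero (a : ℝ) (n : ℕ) :
    expCoeff (Pi.single 0 a) n = a ^ n / n.factorial := by
  refine (congrFun (eq_expCoeff (x := fun n => a ^ n / n.factorial) (by simp) fun n => ?_) n).symm
  rw [Finset.sum_eq_single (0, n)]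
  · rw [Pi.single_eq_same, Nat.factorial_succ, pow_succ]
    push_cast
    field_simp
  · rintro ⟨i, j⟩ hij hne
    have hi : i ≠ 0 := by
      rintro rfl
      simp_all
    simp [hi]
  · simp

lemma expCoeff_nonneg (hq : 0 ≤ q) (n : ℕ) : 0 ≤ expCoeff q n := by
  induction n using Nat.strong_induction_on with
  | _ n ih =>
    cases n with
    | zero => simp
    | succ n =>
      rw [expCoeff_succ]
      exact div_nonneg (Finset.sum_nonneg fun j hj =>
        mul_nonneg (hq _) (ih j (Finset.mem_range.1 hj))) (by positivity)

lemma expCoeff_mono (hq : 0 ≤ q) (hqr : q ≤ r) (n : ℕ) : expCoeff q n ≤ expCoeff r n := by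
  induction n using Nat.strong_induction_on with
  | _ n ih =>
    cases n with
    | zero => simp
    | succ n =>
      rw [expCoeff_succ, expCoeff_succ]
      gcongr with j hj
      · exact expCoeff_nonneg hq j
      · exact (hq _).trans (hqr _)
      · exact hqr _
      · exact ih j (Finset.mem_range.1 hj)

lemma tendsto_expCoeff {α : Type*} {l : Filter α} {Q : α → ℕ → ℝ}
    (hQ : ∀ i, Tendsto (fun x => Q x i) l (𝓝 (q i))) (n : ℕ) :
    Tendsto (fun x => expCoeff (Q x) n) l (𝓝 (expCoeff q n)) := by
  induction n using Nat.strong_induction_on with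
  | _ n ih =>
    cases n with
    | zero => simpa using tendsto_const_nhds
    | succ n =>
      simp only [expCoeff_succ]
      exact (tendsto_finsetSum _ fun j hj =>
        (hQ _).mul (ih j (Finset.mem_range.1 hj))).div_const _

lemma sum_range_mul_expCoeff_le (hq : 0 ≤ q) (hq_sum : Summable q) (N : ℕ) :
    ∑ n ∈ Finset.range N, n * expCoeff q n ≤ (∑' i, q i) * ∑ n ∈ Finset.range N, expCoeff q n := by
  cases N with
  | zero => simp
  | succ N =>
    calc ∑ n ∈ Finset.range (N + 1), n * expCoeff q n
        = ∑ n ∈ Finset.range N, ∑ j ∈ Finset.range (n + 1), q (n - j) * expCoeff q j := by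
          rw [Finset.sum_range_succ', Nat.cast_zero, zero_mul, add_zero]
          refine Finset.sum_congr rfl fun n _ => ?_
          rw [expCoeff_succ]
          push_cast
          field_simp
      _ = ∑ j ∈ Finset.range N, ∑ i ∈ Finset.range (N - j), q i * expCoeff q j :=
          Finset.sum_range_diag_flip N fun j i => q i * expCoeff q j
      _ ≤ ∑ j ∈ Finset.range N, (∑' i, q i) * expCoeff q j := by
          gcongr with j
          rw [← Finset.sum_mul]
          gcongr
          · exact expCoeff_nonneg hq j
          · exact hq_sum.sum_le_tsum _ fun i _ => hq i
      _ ≤ (∑' i, q i) * ∑ n ∈ Finset.range (N + 1), expCoeff q n := by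
          rw [← Finset.mul_sum]
          gcongr
          · exact tsum_nonneg hq
          · exact fun n _ _ => expCoeff_nonneg hq n
          · exact N.le_succ

lemma summable_expCoeff (hq : 0 ≤ q) (hq_sum : Summable q) : Summable (expCoeff q) := by
  have hx := expCoeff_nonneg hq
  have hq_tsum : 0 ≤ ∑' i, q i := tsum_nonneg hq
  -- Indices beyond `M > 2 * ∑ q` carry at most half of any partial sum, as their mean is `≤ ∑ q`.
  obtain ⟨M, hM⟩ := exists_nat_gt (2 * ∑' i, q i)
  set S : ℕ → ℝ := fun N => ∑ n ∈ Finset.range N, expCoeff q n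
  have hS_nonneg (N : ℕ) : 0 ≤ S N := Finset.sum_nonneg fun n _ => hx n
  refine summable_of_sum_range_le (c := 2 * S M) hx fun N => show S N ≤ 2 * S M from ?_
  rcases le_total N M with hNM | hMN
  · have hS_mono : S N ≤ S M :=
      Finset.sum_le_sum_of_subset_of_nonneg (Finset.range_mono hNM) fun n _ _ => hx n
    linarith [hS_nonneg M]
  · have hIco : M * (S N - S M) ≤ (∑' i, q i) * S N :=
      calc M * (S N - S M) = ∑ n ∈ Finset.Ico M N, M * expCoeff q n := by
            rw [← Finset.mul_sum, Finset.sum_Ico_eq_sub _ hMN]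
        _ ≤ ∑ n ∈ Finset.Ico M N, n * expCoeff q n := by
            gcongr with n hn
            · exact hx n
            · exact (Finset.mem_Ico.1 hn).1
        _ ≤ ∑ n ∈ Finset.range N, n * expCoeff q n :=
            Finset.sum_le_sum_of_subset_of_nonneg (by
              rw [Finset.range_eq_Ico]; exact Finset.Ico_subset_Ico_left M.zero_le)
              fun n _ _ => mul_nonneg n.cast_nonneg (hx n)
        _ ≤ (∑' i, q i) * S N := sum_range_mul_expCoeff_le hq hq_sum N
    nlinarith [hS_nonneg N]

end ExpCoeff

lemma tendsto_sum_antidiagonal {E : Type*} [NormedAddCommGroup E] [CompleteSpace E]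
    {b : ℕ → ℕ → E} {l : ℕ → E} {u : ℕ → ℝ} (hu : Summable u) (hb : ∀ i j, ‖b i j‖ ≤ u i)
    (hl : ∀ i, Tendsto (b i) atTop (𝓝 (l i))) :
    Tendsto (fun k => ∑ ij ∈ antidiagonal k, b ij.1 ij.2) atTop (𝓝 (∑' i, l i)) := by
  have hsum (k : ℕ) : ∑ ij ∈ antidiagonal k, b ij.1 ij.2 =
      ∑' i, if i ≤ k then b i (k - i) else 0 := by
    rw [Finset.Nat.sum_antidiagonal_eq_sum_range_succ b,
      tsum_eq_sum (s := Finset.range k.succ) fun i hi => if_neg (by simpa using hi)]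
    exact Finset.sum_congr rfl fun i hi => (if_pos (Finset.mem_range_succ_iff.1 hi)).symm
  simp only [hsum]
  refine tendsto_tsum_of_dominated_convergence hu (fun i => ?_) (.of_forall fun k i => ?_)
  · refine ((hl i).comp (tendsto_sub_atTop_nat i)).congr' ?_
    filter_upwards [eventually_ge_atTop i] with k hk
    simp [hk]
  · split_ifs
    · exact hb i _
    · simpa using (norm_nonneg _).trans (hb i 0)

lemma setIntegral_Ioc_add_setIntegral_Ioc {f : ℝ → ℝ} {a b c : ℝ} (hf : IntegrableOn f (Ioc a c))
    (hab : a ≤ b) (hbc : b ≤ c) :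
    (∫ x in Ioc a b, f x) + ∫ x in Ioc b c, f x = ∫ x in Ioc a c, f x := by
  rw [← setIntegral_union (Set.Ioc_disjoint_Ioc_of_le le_rfl) measurableSet_Ioc
    (hf.mono_set (Set.Ioc_subset_Ioc_right hbc)) (hf.mono_set (Set.Ioc_subset_Ioc_left hab)),
    Set.Ioc_union_Ioc_eq_Ioc hab hbc]

section LogSingularity

variable {a b c A δ : ℝ} {L : ℝ → ℝ}

lemma image_add_mul_exp_neg_Ioi (a : ℝ) (hA : 0 < A) :
    (fun u => a + A * exp (-u)) '' Ioi 0 = Ioo a (a + A) := by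
  ext x
  constructor
  · rintro ⟨u, hu : 0 < u, rfl⟩
    have hu_exp : exp (-u) < 1 := by simpa using hu
    constructor <;> nlinarith [exp_pos (-u)]
  · rintro ⟨hax, hxA⟩
    have hx : 0 < x - a := sub_pos.2 hax
    refine ⟨log (A / (x - a)), log_pos ((one_lt_div hx).2 (by linarith)), ?_⟩
    dsimp only
    rw [← log_inv, inv_div, exp_log (by positivity)]
    field_simp
    ring

lemma antitoneOn_add_mul_exp_neg (a : ℝ) (hA : 0 < A) (s : Set ℝ) :
    AntitoneOn (fun u => a + A * exp (-u)) s := fun u _ v _ huv => by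
  dsimp only
  gcongr

lemma hasDerivAt_add_mul_exp_neg (a A u : ℝ) :
    HasDerivAt (fun u => a + A * exp (-u)) (-(A * exp (-u))) u := by
  simpa using ((hasDerivAt_neg u).exp.const_mul A).const_add a

lemma log_div_add_mul_exp_neg_sub (a : ℝ) (hA : 0 < A) (u : ℝ) :
    log (A / (a + A * exp (-u) - a)) = u := by
  rw [add_sub_cancel_left, div_mul_cancel_left₀ hA.ne', ← exp_neg, neg_neg, log_exp]

lemma integrableOn_log_div_sub_pow (a : ℝ) (hA : 0 < A) (m : ℕ) :
    IntegrableOn (fun x => log (A / (x - a)) ^ m) (Ioc a (a + A)) := by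
  rw [integrableOn_Ioc_iff_integrableOn_Ioo, ← image_add_mul_exp_neg_Ioi a hA,
    integrableOn_image_iff_integrableOn_deriv_smul_of_antitoneOn measurableSet_Ioi
      (fun u _ => (hasDerivAt_add_mul_exp_neg a A u).hasDerivWithinAt)
      (antitoneOn_add_mul_exp_neg a hA _)]
  have hGamma : IntegrableOn (fun u => exp (-u) * u ^ m) (Ioi 0) := by
    simpa using GammaIntegral_convergent (s := m + 1) (by positivity)
  simp only [log_div_add_mul_exp_neg_sub a hA, neg_neg, smul_eq_mul, mul_assoc]
  exact hGamma.const_mul A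

lemma setIntegral_log_div_sub_pow (a : ℝ) (hA : 0 < A) (m : ℕ) :
    ∫ x in Ioc a (a + A), log (A / (x - a)) ^ m = A * m.factorial := by
  rw [integral_Ioc_eq_integral_Ioo, ← image_add_mul_exp_neg_Ioi a hA,
    integral_image_eq_integral_deriv_smul_of_antitoneOn measurableSet_Ioi
      (fun u _ => (hasDerivAt_add_mul_exp_neg a A u).hasDerivWithinAt)
      (antitoneOn_add_mul_exp_neg a hA _)]
  have hGamma : ∫ u in Ioi 0, exp (-u) * u ^ m = m.factorial := by
    simpa [Gamma_nat_eq_factorial] using (Gamma_eq_integral (s := m + 1) (by positivity)).symm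
  simp only [log_div_add_mul_exp_neg_sub a hA, neg_neg, smul_eq_mul, mul_assoc]
  rw [integral_const_mul, hGamma]

lemma tendsto_setIntegral_pow_div_factorial_of_le {s : Set ℝ} {f : ℝ → ℝ} {M : ℝ}
    (hs : volume s < ⊤) (hf : ∀ x ∈ s, |f x| ≤ M) :
    Tendsto (fun m : ℕ => ∫ x in s, f x ^ m / m.factorial) atTop (𝓝 0) := by
  refine squeeze_zero_norm (a := fun m : ℕ => M ^ m / m.factorial * volume.real s) (fun m => ?_) ?_
  · refine norm_setIntegral_le_of_norm_le_const hs fun x hx => ?_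
    rw [norm_div, norm_pow, norm_eq_abs, RCLike.norm_natCast]
    gcongr
    exact hf x hx
  · simpa using (FloorSemiring.tendsto_pow_div_factorial_atTop M).mul_const (volume.real s)

lemma tendsto_setIntegral_log_div_sub_pow_div_factorial (a : ℝ) (hδ : 0 < δ) (hδA : δ ≤ A) :
    Tendsto (fun m : ℕ => ∫ x in Ioc a (a + δ), log (A / (x - a)) ^ m / m.factorial) atTop
      (𝓝 A) := by
  have hA : 0 < A := hδ.trans_le hδA
  have hint (m : ℕ) :
      IntegrableOn (fun x => log (A / (x - a)) ^ m / m.factorial) (Ioc a (a + A)) :=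
    (integrableOn_log_div_sub_pow a hA m).div_const _
  have htotal (m : ℕ) : ∫ x in Ioc a (a + A), log (A / (x - a)) ^ m / m.factorial = A := by
    rw [integral_div, setIntegral_log_div_sub_pow a hA, mul_div_cancel_right₀ _ (by positivity)]
  have hsplit (m : ℕ) : ∫ x in Ioc a (a + δ), log (A / (x - a)) ^ m / m.factorial =
      A - ∫ x in Ioc (a + δ) (a + A), log (A / (x - a)) ^ m / m.factorial := by
    rw [eq_sub_iff_add_eq, setIntegral_Ioc_add_setIntegral_Ioc (hint m) (by linarith)
      (by linarith), htotal]
  have htail : Tendsto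
      (fun m : ℕ => ∫ x in Ioc (a + δ) (a + A), log (A / (x - a)) ^ m / m.factorial) atTop
        (𝓝 0) := by
    refine tendsto_setIntegral_pow_div_factorial_of_le (M := log (A / δ)) (by simp) ?_
    rintro x ⟨hδx, hxA⟩
    have hx : 0 < x - a := by linarith
    rw [abs_of_nonneg (log_nonneg ((one_le_div hx).2 (by linarith)))]
    gcongr
    linarith
  simpa only [hsplit, sub_zero] using htail.const_sub A

variable (hL_anti : AntitoneOn L (Ioi a)) (hL_nonneg : ∀ x ∈ Ioi a, 0 ≤ L x)
  (hL : Tendsto (fun x => (x - a) * exp (L x)) (𝓝[>] a) (𝓝 c))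

include hL in
lemma exists_forall_mem_Ioc_log_div_sub_le {B : ℝ} (hB : 0 < B) (hBc : B < c) (hcA : c < A)
    (hab : a < b) :
    ∃ δ > 0, δ ≤ B ∧ a + δ ≤ b ∧
      ∀ x ∈ Ioc a (a + δ), log (B / (x - a)) ≤ L x ∧ L x ≤ log (A / (x - a)) := by
  obtain ⟨u, hau, hu⟩ := mem_nhdsGT_iff_exists_Ioc_subset.1 (hL (Ioo_mem_nhds hBc hcA))
  refine ⟨min B (min (b - a) (u - a)), ?_, min_le_left _ _, ?_, fun x hx => ?_⟩
  · exact lt_min hB (lt_min (sub_pos.2 hab) (sub_pos.2 hau))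
  · linarith [min_le_right B (min (b - a) (u - a)), min_le_left (b - a) (u - a)]
  · have hxa : 0 < x - a := sub_pos.2 hx.1
    have hxu : x ≤ u := by
      linarith [hx.2, min_le_right B (min (b - a) (u - a)), min_le_right (b - a) (u - a)]
    obtain ⟨hBx, hxA⟩ := hu ⟨hx.1, hxu⟩
    simp only [mul_comm (x - a)] at hBx hxA
    exact ⟨(log_le_iff_le_exp (by positivity)).2 ((div_lt_iff₀ hxa).2 hBx).le,
      (le_log_iff_exp_le (div_pos (hB.trans (hBc.trans hcA)) hxa)).2
        ((lt_div_iff₀ hxa).2 hxA).le⟩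

include hL_anti hL_nonneg

lemma antitoneOn_pow_of_nonneg (m : ℕ) : AntitoneOn (fun x => L x ^ m) (Ioi a) :=
  fun _ hx _ hy hxy => pow_le_pow_left₀ (hL_nonneg _ hy) (hL_anti hx hy hxy) m

lemma tendsto_setIntegral_Ioc_pow_div_factorial {d : ℝ} (had : a < d) (b : ℝ) :
    Tendsto (fun m : ℕ => ∫ x in Ioc d b, L x ^ m / m.factorial) atTop (𝓝 0) := by
  refine tendsto_setIntegral_pow_div_factorial_of_le (M := L d) (by simp) fun x hx => ?_
  have hax : a < x := had.trans hx.1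
  rw [abs_of_nonneg (hL_nonneg x hax)]
  exact hL_anti had hax hx.1.le

include hL

lemma integrableOn_pow_of_tendsto (hc : 0 < c) (b : ℝ) (m : ℕ) :
    IntegrableOn (fun x => L x ^ m) (Ioc a b) := by
  have hpow_anti := antitoneOn_pow_of_nonneg hL_anti hL_nonneg m
  obtain hba | hab := le_or_gt b a
  · simp [Set.Ioc_eq_empty hba.not_gt]
  obtain ⟨δ, hδ, hδc, hδb, hδL⟩ := exists_forall_mem_Ioc_log_div_sub_le hL (half_pos hc)
    (half_lt_self hc) (lt_add_one c) hab
  rw [← Set.Ioc_union_Ioc_eq_Ioc (by linarith) hδb]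
  refine IntegrableOn.union ?_ ?_
  · refine ((integrableOn_log_div_sub_pow a (by linarith : 0 < c + 1) m).mono_set
      (Set.Ioc_subset_Ioc_right (by linarith))).mono'
      (aemeasurable_restrict_of_antitoneOn measurableSet_Ioc
        (hpow_anti.mono Set.Ioc_subset_Ioi_self)).aestronglyMeasurable
      ((ae_restrict_mem measurableSet_Ioc).mono fun x hx => ?_)
    rw [norm_pow, norm_of_nonneg (hL_nonneg x hx.1)]
    exact pow_le_pow_left₀ (hL_nonneg x hx.1) (hδL x hx).2 m
  · exact ((hpow_anti.mono (Set.Icc_subset_Ioi_iff hδb |>.2 (by linarith))).integrableOn_isCompact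
      isCompact_Icc).mono_set Set.Ioc_subset_Icc_self

lemma tendsto_setIntegral_pow_div_factorial (hc : 0 < c) (hab : a < b) :
    Tendsto (fun m : ℕ => ∫ x in Ioc a b, L x ^ m / m.factorial) atTop (𝓝 c) := by
  have hint (m : ℕ) : IntegrableOn (fun x => L x ^ m / m.factorial) (Ioc a b) :=
    (integrableOn_pow_of_tendsto hL_anti hL_nonneg hL hc b m).div_const _
  refine (nhds_basis_Ioo c).tendsto_right_iff.2 ?_
  rintro ⟨l, u⟩ ⟨hlc, hcu⟩
  obtain ⟨B, hlB, hBc⟩ := exists_between (max_lt hlc hc)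
  obtain ⟨A, hcA, hAu⟩ := exists_between hcu
  have hB : 0 < B := (le_max_right l 0).trans_lt hlB
  obtain ⟨δ, hδ, hδB, hδb, hδL⟩ := exists_forall_mem_Ioc_log_div_sub_le hL hB hBc hcA hab
  have hlog_int {D : ℝ} (hδD : δ ≤ D) (m : ℕ) :
      IntegrableOn (fun x => log (D / (x - a)) ^ m / m.factorial) (Ioc a (a + δ)) :=
    ((integrableOn_log_div_sub_pow a (hδ.trans_le hδD) m).mono_set
      (Set.Ioc_subset_Ioc_right (by linarith))).div_const _
  have hδA : δ ≤ A := by linarith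
  have htail := tendsto_setIntegral_Ioc_pow_div_factorial hL_anti hL_nonneg
    (by linarith : a < a + δ) b
  have hlower := (tendsto_setIntegral_log_div_sub_pow_div_factorial a hδ hδB).add htail
  have hupper := (tendsto_setIntegral_log_div_sub_pow_div_factorial a hδ hδA).add htail
  rw [add_zero] at hlower hupper
  filter_upwards [hlower (Ioi_mem_nhds ((le_max_left l 0).trans_lt hlB)),
    hupper (Iio_mem_nhds hAu)] with m hlm hmu
  rw [← setIntegral_Ioc_add_setIntegral_Ioc (hint m) (by linarith) hδb]
  refine ⟨hlm.trans_le ?_, lt_of_le_of_lt ?_ hmu⟩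
  · refine add_le_add_left (setIntegral_mono_on (hlog_int hδB m)
      ((hint m).mono_set (Set.Ioc_subset_Ioc_right hδb)) measurableSet_Ioc fun x hx => ?_) _
    have hlog_nonneg : 0 ≤ log (B / (x - a)) :=
      log_nonneg ((one_le_div (sub_pos.2 hx.1)).2 (by linarith [hx.2]))
    gcongr
    exact (hδL x hx).1
  · refine add_le_add_left (setIntegral_mono_on
      ((hint m).mono_set (Set.Ioc_subset_Ioc_right hδb)) (hlog_int hδA m) measurableSet_Ioc
      fun x hx => ?_) _
    have hLx_nonneg := hL_nonneg x hx.1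
    gcongr
    exact (hδL x hx).2

end LogSingularity

lemma tendstoUniformlyOn_zero_Ici_of_antitoneOn {ι : Type*} {F : Filter ι} {φ : ι → ℝ → ℝ}
    {a d : ℝ} (had : a < d) (hφ_nonneg : ∀ᶠ i in F, ∀ x ∈ Ioi a, 0 ≤ φ i x)
    (hφ_anti : ∀ᶠ i in F, AntitoneOn (φ i) (Ioi a)) (hφ_zero : Tendsto (φ · d) F (𝓝 0)) :
    TendstoUniformlyOn φ 0 F (Set.Ici d) := by
  refine Metric.tendstoUniformlyOn_iff.2 fun ε hε => ?_
  filter_upwards [hφ_nonneg, hφ_anti, hφ_zero (Iio_mem_nhds hε)] with i hi_nonneg hi_anti hiε x hdx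
  have hax : a < x := had.trans_le hdx
  rw [Pi.zero_apply, dist_zero_left, norm_of_nonneg (hi_nonneg x hax)]
  exact (hi_anti had hax hdx).trans_lt hiε

lemma tendsto_setIntegral_mul_of_antitoneOn {ι : Type*} {F : Filter ι} {φ : ι → ℝ → ℝ}
    {g : ℝ → ℝ} {a b c l : ℝ} {s : Set ℝ} (hs : MeasurableSet s) (hsa : s ⊆ Ioi a) (hab : a < b)
    (hbs : Ioc a b ⊆ s) (hφ_nonneg : ∀ᶠ i in F, ∀ x ∈ Ioi a, 0 ≤ φ i x)
    (hφ_anti : ∀ᶠ i in F, AntitoneOn (φ i) (Ioi a))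
    (hφ_zero : ∀ x ∈ Ioi a, Tendsto (φ · x) F (𝓝 0)) (hc : 0 < c)
    (hφ_int : Tendsto (fun i => ∫ x in Ioc a b, φ i x) F (𝓝 c)) (hg : IntegrableOn g s)
    (hgl : Tendsto g (𝓝[>] a) (𝓝 l)) :
    Tendsto (fun i => ∫ x in s, φ i x * g x) F (𝓝 (c * l)) := by
  have hpeak : Tendsto (fun i => ∫ x in s, (c⁻¹ * φ i x) • g x) F (𝓝 l) := by
    refine tendsto_setIntegral_peak_smul_of_integrableOn_of_tendsto hs measurableSet_Ioc hbs
      (nhdsWithin_mono a hsa (Ioc_mem_nhdsGT hab)) (by simp) ?_ (fun u hu hau => ?_) ?_ ?_ hg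
      (hgl.mono_left (nhdsWithin_mono a hsa))
    · filter_upwards [hφ_nonneg] with i hi x hx
      exact mul_nonneg (inv_nonneg.2 hc.le) (hi x (hsa hx))
    · obtain ⟨d, had, hdu⟩ := mem_nhdsGE_iff_exists_Ico_subset.1
        (mem_nhdsWithin_of_mem_nhds (hu.mem_nhds hau))
      refine (tendstoUniformlyOn_zero_Ici_of_antitoneOn had ?_ ?_ ?_).mono fun x hx =>
        not_lt.1 fun hxd => hx.2 (hdu ⟨(hsa hx.1).le, hxd⟩)
      · filter_upwards [hφ_nonneg] with i hi x hx
        exact mul_nonneg (inv_nonneg.2 hc.le) (hi x hx)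
      · filter_upwards [hφ_anti] with i hi
        exact fun x hx y hy hxy => mul_le_mul_of_nonneg_left (hi hx hy hxy) (inv_nonneg.2 hc.le)
      · simpa using (hφ_zero d had).const_mul c⁻¹
    · simpa only [integral_const_mul, inv_mul_cancel₀ hc.ne'] using hφ_int.const_mul c⁻¹
    · filter_upwards [hφ_anti] with i hi
      exact ((aemeasurable_restrict_of_antitoneOn hs (hi.mono hsa)).const_mul
        _).aestronglyMeasurable
  refine (hpeak.const_mul c).congr fun i => ?_
  simp only [smul_eq_mul, mul_assoc, integral_const_mul]
  rw [mul_inv_cancel_left₀ hc.ne']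

lemma integral_tsum_of_nonneg {α ι : Type*} [MeasurableSpace α] [Countable ι] {μ : Measure α}
    {f : ι → α → ℝ} (hf : ∀ i, Integrable (f i) μ) (hf_nonneg : ∀ i, 0 ≤ᵐ[μ] f i)
    (hf_sum : ∀ᵐ x ∂μ, Summable fun i => f i x) :
    ∫ x, ∑' i, f i x ∂μ = ∑' i, ∫ x, f i x ∂μ := by
  have hnonneg : ∀ᵐ x ∂μ, ∀ i, 0 ≤ f i x := ae_all_iff.2 hf_nonneg
  have hofReal : ∀ᵐ x ∂μ,
      ENNReal.ofReal (∑' i, f i x) = ∑' i, ENNReal.ofReal (f i x) := by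
    filter_upwards [hnonneg, hf_sum] with x hx hx_sum
    exact ENNReal.ofReal_tsum_of_nonneg hx hx_sum
  have hmeas (i : ι) : AEMeasurable (fun x => ENNReal.ofReal (f i x)) μ :=
    (hf i).aemeasurable.ennreal_ofReal
  have hreal : ∀ᵐ x ∂μ, ∑' i, f i x = (∑' i, ENNReal.ofReal (f i x)).toReal := by
    filter_upwards [hnonneg, hofReal] with x hx hx_ofReal
    rw [← hx_ofReal, ENNReal.toReal_ofReal (tsum_nonneg hx)]
  rw [integral_congr_ae hreal, integral_toReal (AEMeasurable.tsum hmeas)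
    (by filter_upwards [hofReal] with x hx using hx ▸ ENNReal.ofReal_lt_top), lintegral_tsum hmeas,
    ENNReal.tsum_toReal_eq fun i => ?_]
  · exact tsum_congr fun i => (integral_eq_lintegral_of_nonneg_ae (hf_nonneg i) (hf i).1).symm
  · exact ((hf i).lintegral_lt_top).ne

section DirichletSum

variable {A : Set ℕ} {s t : ℝ}

lemma summable_subtype_rpow_neg (A : Set ℕ) (hs : 1 < s) :
    Summable fun n : A => (n.1 : ℝ) ^ (-s) :=
  (summable_nat_rpow.2 (neg_lt_neg hs)).subtype A

lemma rpow_neg_le_two_rpow_sub_mul {x : ℝ} (hx : 2 ≤ x) (hts : t ≤ s) :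
    x ^ (-s) ≤ 2 ^ (t - s) * x ^ (-t) := by
  have hx_pos : 0 < x := by linarith
  calc x ^ (-s) = x ^ (t - s) * x ^ (-t) := by rw [← rpow_add hx_pos]; ring_nf
    _ ≤ 2 ^ (t - s) * x ^ (-t) := by
      gcongr ?_ * _
      exact rpow_le_rpow_of_nonpos two_pos hx (sub_nonpos.2 hts)

lemma tsum_rpow_neg_le_two_rpow_sub_mul (hA : ∀ n ∈ A, 2 ≤ n) (ht : 1 < t) (hts : t ≤ s) :
    ∑' n : A, (n.1 : ℝ) ^ (-s) ≤ 2 ^ (t - s) * ∑' n : A, (n.1 : ℝ) ^ (-t) := by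
  rw [← tsum_mul_left]
  exact (summable_subtype_rpow_neg A (ht.trans_le hts)).tsum_le_tsum
    (fun n => rpow_neg_le_two_rpow_sub_mul (mod_cast hA n n.2) hts)
    ((summable_subtype_rpow_neg A ht).mul_left _)

end DirichletSum

section AlmostPrimes

variable {k n p : ℕ} {s t : ℝ}

lemma mem_almostPrimes : n ∈ almostPrimes k ↔ n ≠ 0 ∧ cardFactors n = k := by
  simp [almostPrimes, ArithmeticFunction.cardFactors_apply, Nat.pos_iff_ne_zero]

lemma almostPrimes_zero : almostPrimes 0 = {1} := by
  ext n
  rw [mem_almostPrimes, ArithmeticFunction.cardFactors_eq_zero_iff_eq_zero_or_one]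
  aesop

lemma almostPrimes_one : almostPrimes 1 = {p | p.Prime} := by
  ext p
  rw [mem_almostPrimes, ArithmeticFunction.cardFactors_eq_one_iff_prime]
  exact and_iff_right_of_imp Nat.Prime.ne_zero

lemma two_le_of_mem_almostPrimes (hk : k ≠ 0) (hn : n ∈ almostPrimes k) : 2 ≤ n := by
  obtain ⟨_, rfl⟩ := mem_almostPrimes.1 hn
  by_contra! hlt
  exact hk (ArithmeticFunction.cardFactors_eq_zero_iff_eq_zero_or_one.2 (by omega))

lemma prime_pow_succ_mul_mem_almostPrimes_succ_iff (hp : p.Prime) (i m : ℕ) :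
    p ^ (i + 1) * m ∈ almostPrimes (k + 1) ↔ i ≤ k ∧ m ∈ almostPrimes (k - i) := by
  simp only [mem_almostPrimes]
  obtain rfl | hm := eq_or_ne m 0
  · simp
  have hpow : p ^ (i + 1) ≠ 0 := pow_ne_zero _ hp.ne_zero
  rw [ArithmeticFunction.cardFactors_mul hpow hm, ArithmeticFunction.cardFactors_apply_prime_pow hp]
  simp only [ne_eq, mul_eq_zero, hpow, hm, or_self, not_false_eq_true, true_and]
  omega

lemma Pk_zero (s : ℝ) : Pk 0 s = 1 := by
  rw [Pk, almostPrimes_zero]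
  exact (tsum_singleton 1 fun n : ℕ => (n : ℝ) ^ (-s)).trans (by simp)

lemma Pk_one : Pk 1 = primeZeta := by
  funext s
  rw [Pk, almostPrimes_one]
  rfl

lemma Pk_nonneg (k : ℕ) (s : ℝ) : 0 ≤ Pk k s := tsum_nonneg fun _ => by positivity

lemma primeZeta_nonneg (s : ℝ) : 0 ≤ primeZeta s := Pk_one ▸ Pk_nonneg 1 s

lemma Pk_le_two_rpow_sub_mul (hk : k ≠ 0) (ht : 1 < t) (hts : t ≤ s) :
    Pk k s ≤ 2 ^ (t - s) * Pk k t :=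
  tsum_rpow_neg_le_two_rpow_sub_mul (fun _ => two_le_of_mem_almostPrimes hk) ht hts

lemma primeZeta_le_two_rpow_sub_mul (ht : 1 < t) (hts : t ≤ s) :
    primeZeta s ≤ 2 ^ (t - s) * primeZeta t :=
  Pk_one ▸ Pk_le_two_rpow_sub_mul one_ne_zero ht hts

lemma antitoneOn_primeZeta : AntitoneOn primeZeta (Ioi 1) := fun t ht _ _ hts =>
  (primeZeta_le_two_rpow_sub_mul ht hts).trans (mul_le_of_le_one_left (primeZeta_nonneg t)
    (rpow_le_one_of_one_le_of_nonpos one_le_two (sub_nonpos.2 hts)))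

lemma antitoneOn_two_rpow_sub_one_mul_Pk (hk : k ≠ 0) :
    AntitoneOn (fun s => 2 ^ (s - 1) * Pk k s) (Ioi 1) := fun t ht s _ hts =>
  calc (2 : ℝ) ^ (s - 1) * Pk k s ≤ 2 ^ (s - 1) * (2 ^ (t - s) * Pk k t) := by
        gcongr
        exact Pk_le_two_rpow_sub_mul hk ht hts
    _ = 2 ^ (t - 1) * Pk k t := by
        rw [← mul_assoc, ← rpow_add two_pos]
        ring_nf

lemma hasSum_Pk (hs : 1 < s) : HasSum (fun k => Pk k s) (∑' n : ℕ, 1 / (n : ℝ) ^ s) := by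
  classical
  have hfiber (k : ℕ) : Pk k s = ∑' n : cardFactors ⁻¹' {k}, (n.1 : ℝ) ^ (-s) := by
    rw [Pk, tsum_subtype (almostPrimes k) fun n : ℕ => (n : ℝ) ^ (-s),
      tsum_subtype (cardFactors ⁻¹' {k}) fun n : ℕ => (n : ℝ) ^ (-s)]
    refine tsum_congr fun n => ?_
    obtain rfl | hn := eq_or_ne n 0
    · simp [Set.indicator_apply, zero_rpow (by linarith : -s ≠ 0)]
    · simp [Set.indicator_apply, mem_almostPrimes, hn]
  simp only [hfiber, one_div, ← rpow_neg (Nat.cast_nonneg _)]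
  exact (summable_nat_rpow.2 (neg_lt_neg hs)).hasSum.tsum_fiberwise _

lemma tendsto_Pk_zero (hs : 1 < s) : Tendsto (fun k => Pk k s) atTop (𝓝 0) :=
  (hasSum_Pk hs).summable.tendsto_atTop_zero

end AlmostPrimes

section Newton

variable {n p : ℕ} {s : ℝ}

lemma tsum_ite_prime_pow_succ_dvd (hp : p.Prime) (hn : n ≠ 0) :
    ∑' i : ℕ, (if p ^ (i + 1) ∣ n then (1 : ℝ≥0∞) else 0) = n.factorization p := by
  have hdvd (i : ℕ) : p ^ (i + 1) ∣ n ↔ i ∈ Finset.range (n.factorization p) := by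
    rw [hp.pow_dvd_iff_le_factorization hn, Finset.mem_range, Nat.succ_le_iff]
  simp only [hdvd]
  rw [tsum_eq_sum fun i hi => if_neg hi, Finset.sum_ite_mem, Finset.inter_self]
  simp

lemma tsum_primes_factorization (n : ℕ) :
    ∑' p : Nat.Primes, (n.factorization p : ℝ≥0∞) = cardFactors n := by
  have hsupport : Function.support (fun p => (n.factorization p : ℝ≥0∞)) ⊆ {p | p.Prime} := by
    intro p hp
    contrapose! hp
    simp [Nat.factorization_eq_zero_of_not_prime n hp]
  rw [ArithmeticFunction.cardFactors_eq_sum_factorization, Finsupp.sum, Nat.cast_sum]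
  refine (tsum_subtype_eq_of_support_subset hsupport).trans (tsum_eq_sum fun p hp => ?_)
  rw [Finsupp.notMem_support_iff.1 hp, Nat.cast_zero]

lemma tsum_ite_dvd {d : ℕ} (hd : d ≠ 0) (F : ℕ → ℝ≥0∞) :
    ∑' n : ℕ, (if d ∣ n then F n else 0) = ∑' m : ℕ, F (d * m) := by
  rw [← (mul_right_injective₀ hd).tsum_eq]
  · simp
  · intro n hn
    obtain ⟨m, rfl⟩ : d ∣ n := by
      by_contra hdvd
      simp [hdvd] at hn
    exact ⟨m, rfl⟩

lemma tsum_cardFactors_mul {F : ℕ → ℝ≥0∞} (hF : F 0 = 0) :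
    ∑' n : ℕ, cardFactors n * F n =
      ∑' (p : Nat.Primes) (i : ℕ) (m : ℕ), F (p.1 ^ (i + 1) * m) :=
  calc ∑' n : ℕ, cardFactors n * F n
      = ∑' (n : ℕ) (p : Nat.Primes) (i : ℕ), (if p.1 ^ (i + 1) ∣ n then F n else 0) := by
        refine tsum_congr fun n => ?_
        obtain rfl | hn := eq_or_ne n 0
        · simp [hF]
        rw [← tsum_primes_factorization, ← ENNReal.tsum_mul_right]
        refine tsum_congr fun p => ?_
        rw [← tsum_ite_prime_pow_succ_dvd p.2 hn, ← ENNReal.tsum_mul_right]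
        simp only [ite_mul, one_mul, zero_mul]
    _ = ∑' (p : Nat.Primes) (i : ℕ) (n : ℕ), (if p.1 ^ (i + 1) ∣ n then F n else 0) := by
        rw [ENNReal.tsum_comm]
        exact tsum_congr fun p => ENNReal.tsum_comm
    _ = ∑' (p : Nat.Primes) (i : ℕ) (m : ℕ), F (p.1 ^ (i + 1) * m) :=
        tsum_congr fun p => tsum_congr fun i => tsum_ite_dvd (pow_ne_zero _ p.2.ne_zero) F

lemma tsum_indicator_almostPrimes (hs : 1 < s) (k : ℕ) :
    ∑' n : ℕ, (almostPrimes k).indicator (fun n => ENNReal.ofReal ((n : ℝ) ^ (-s))) n =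
      ENNReal.ofReal (Pk k s) := by
  rw [Pk, ENNReal.ofReal_tsum_of_nonneg (fun _ => by positivity)
    (summable_subtype_rpow_neg _ hs)]
  exact (tsum_subtype _ _).symm

lemma tsum_cardFactors_mul_indicator_almostPrimes (hs : 1 < s) (k : ℕ) :
    ∑' n : ℕ, cardFactors n *
        (almostPrimes k).indicator (fun n => ENNReal.ofReal ((n : ℝ) ^ (-s))) n =
      ENNReal.ofReal (k * Pk k s) := by
  rw [ENNReal.ofReal_mul k.cast_nonneg, ENNReal.ofReal_natCast, ← tsum_indicator_almostPrimes hs,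
    ← ENNReal.tsum_mul_left]
  refine tsum_congr fun n => ?_
  by_cases hn : n ∈ almostPrimes k
  · rw [(mem_almostPrimes.1 hn).2]
  · simp [hn]

lemma tsum_indicator_almostPrimes_prime_pow_mul (hs : 1 < s) (hp : p.Prime) (i k : ℕ) :
    ∑' m : ℕ, (almostPrimes (k + 1)).indicator (fun n => ENNReal.ofReal ((n : ℝ) ^ (-s)))
        (p ^ (i + 1) * m) =
      if i ≤ k then ENNReal.ofReal ((p : ℝ) ^ (-((i + 1) * s))) * ENNReal.ofReal (Pk (k - i) s)
      else 0 := by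
  classical
  simp only [Set.indicator_apply, prime_pow_succ_mul_mem_almostPrimes_succ_iff hp]
  split_ifs with hik
  · rw [← tsum_indicator_almostPrimes hs, ← ENNReal.tsum_mul_left]
    refine tsum_congr fun m => ?_
    have hpow : ((p ^ (i + 1) * m : ℕ) : ℝ) ^ (-s) =
        (p : ℝ) ^ (-((i + 1) * s)) * (m : ℝ) ^ (-s) := by
      rw [Nat.cast_mul, mul_rpow (by positivity) (by positivity), Nat.cast_pow, ← rpow_natCast,
        ← rpow_mul (by positivity)]
      push_cast
      ring_nf
    simp only [hik, true_and, hpow, Set.indicator_apply, mul_ite, mul_zero,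
      ENNReal.ofReal_mul (rpow_nonneg (Nat.cast_nonneg p) _)]
  · simp [hik]

lemma ofReal_primeZeta (hs : 1 < s) :
    ENNReal.ofReal (primeZeta s) = ∑' p : Nat.Primes, ENNReal.ofReal ((p.1 : ℝ) ^ (-s)) :=
  ENNReal.ofReal_tsum_of_nonneg (fun _ => by positivity)
    (Nat.Primes.summable_rpow.2 (neg_lt_neg hs))

lemma succ_mul_Pk_succ (hs : 1 < s) (k : ℕ) :
    (k + 1) * Pk (k + 1) s =
      ∑ ij ∈ antidiagonal k, primeZeta ((ij.1 + 1) * s) * Pk ij.2 s := by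
  set F : ℕ → ℝ≥0∞ :=
    (almostPrimes (k + 1)).indicator fun n => ENNReal.ofReal ((n : ℝ) ^ (-s)) with hF
  have hmul_s (i : ℕ) : 1 < (i + 1) * s := by nlinarith [(i.cast_nonneg : (0 : ℝ) ≤ i)]
  have hterm_nonneg (i j : ℕ) : 0 ≤ primeZeta ((i + 1) * s) * Pk j s :=
    mul_nonneg (primeZeta_nonneg _) (Pk_nonneg j s)
  rw [Finset.Nat.sum_antidiagonal_eq_sum_range_succ fun i j => primeZeta ((i + 1) * s) * Pk j s,
    ← ENNReal.ofReal_eq_ofReal_iff (mul_nonneg (by positivity) (Pk_nonneg _ _))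
      (Finset.sum_nonneg fun i _ => hterm_nonneg i _)]
  calc ENNReal.ofReal ((k + 1) * Pk (k + 1) s)
      = ∑' n : ℕ, cardFactors n * F n := by
        rw [tsum_cardFactors_mul_indicator_almostPrimes hs, Nat.cast_succ]
    _ = ∑' (p : Nat.Primes) (i : ℕ) (m : ℕ), F (p.1 ^ (i + 1) * m) :=
        tsum_cardFactors_mul (by simp [hF, mem_almostPrimes])
    _ = ∑' p : Nat.Primes, ∑ i ∈ Finset.range (k + 1),
          ENNReal.ofReal ((p.1 : ℝ) ^ (-((i + 1) * s))) * ENNReal.ofReal (Pk (k - i) s) := by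
        refine tsum_congr fun p => ?_
        simp only [hF, tsum_indicator_almostPrimes_prime_pow_mul hs p.2, ← Nat.lt_succ_iff,
          ← Finset.mem_range]
        rw [tsum_eq_sum fun i hi => if_neg hi]
        exact Finset.sum_congr rfl fun i hi => if_pos hi
    _ = ENNReal.ofReal (∑ i ∈ Finset.range (k + 1), primeZeta ((i + 1) * s) * Pk (k - i) s) := by
        rw [Summable.tsum_finsetSum fun _ _ => ENNReal.summable,
          ENNReal.ofReal_sum_of_nonneg fun i _ => hterm_nonneg i _]
        simp only [ENNReal.tsum_mul_right, ← ofReal_primeZeta (hmul_s _),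
          ENNReal.ofReal_mul (primeZeta_nonneg _)]

end Newton

lemma continuousOn_primeZeta : ContinuousOn primeZeta (Ioi 1) := fun s hs => by
  obtain ⟨t, ht, hts⟩ := exists_between (Set.mem_Ioi.1 hs)
  have hcont : ContinuousOn primeZeta (Set.Ici t) :=
    continuousOn_tsum
      (fun p => ((continuous_const_rpow (mod_cast p.2.ne_zero)).comp continuous_neg).continuousOn)
      (Nat.Primes.summable_rpow.2 (neg_lt_neg ht)) fun p x hx => by
        rw [norm_of_nonneg (by positivity)]
        exact rpow_le_rpow_of_exponent_le (mod_cast p.2.one_lt.le) (neg_le_neg hx)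
  exact (hcont.continuousAt (Ici_mem_nhds hts)).continuousWithinAt

section RegularPart

variable {s t : ℝ}

/-- The power sums `P((i + 1) s)`, with the only one singular at `s = 1`, the zeroth, removed. -/
noncomputable def regularPowerSum (s : ℝ) (i : ℕ) : ℝ :=
  if i = 0 then 0 else primeZeta ((i + 1) * s)

/-- The coefficients of `exp (∑_{j ≥ 2} P(j s) z ^ j / j)`: what is left of the generating function
`∑ P_k(s) z ^ k` after division by `exp (P(s) z)`. -/
noncomputable def regularCoeff (s : ℝ) : ℕ → ℝ := expCoeff (regularPowerSum s)

lemma regularPowerSum_nonneg (s : ℝ) : 0 ≤ regularPowerSum s := fun i => by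
  rw [regularPowerSum]
  split_ifs
  exacts [le_rfl, primeZeta_nonneg _]

lemma regularPowerSum_le_of_le (hs : 1 ≤ s) (hst : s ≤ t) :
    regularPowerSum t ≤ regularPowerSum s := fun i => by
  rw [regularPowerSum, regularPowerSum]
  split_ifs with hi
  · rfl
  have hi_one : (1 : ℝ) ≤ i := by exact_mod_cast Nat.one_le_iff_ne_zero.2 hi
  exact antitoneOn_primeZeta (show 1 < (i + 1) * s by nlinarith)
    (show 1 < (i + 1) * t by nlinarith) (by gcongr)

lemma tendsto_regularPowerSum (i : ℕ) :
    Tendsto (fun s => regularPowerSum s i) (𝓝[>] 1) (𝓝 (regularPowerSum 1 i)) := by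
  simp only [regularPowerSum]
  split_ifs with hi
  · exact tendsto_const_nhds
  have hi_one : (1 : ℝ) ≤ i := by exact_mod_cast Nat.one_le_iff_ne_zero.2 hi
  have hcont : ContinuousAt primeZeta ((i + 1) * 1) :=
    continuousOn_primeZeta.continuousAt (Ioi_mem_nhds (by linarith))
  exact (hcont.comp (by fun_prop : ContinuousAt (fun s : ℝ => (i + 1) * s) 1)).tendsto.mono_left
    nhdsWithin_le_nhds

lemma summable_regularPowerSum_one : Summable (regularPowerSum 1) := by
  refine .of_nonneg_of_le (regularPowerSum_nonneg 1) (fun i => ?_)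
    (summable_geometric_two.mul_right (2 * primeZeta 2))
  rw [regularPowerSum]
  split_ifs with hi
  · exact mul_nonneg (by positivity) (mul_nonneg zero_le_two (primeZeta_nonneg 2))
  have hi_one : (1 : ℝ) ≤ i := by exact_mod_cast Nat.one_le_iff_ne_zero.2 hi
  calc primeZeta ((i + 1) * 1)
      ≤ 2 ^ (2 - (i + 1) * 1 : ℝ) * primeZeta 2 :=
        primeZeta_le_two_rpow_sub_mul one_lt_two (by linarith)
    _ = (1 / 2) ^ i * (2 * primeZeta 2) := by
        rw [show (2 - (i + 1) * 1 : ℝ) = 1 - i by ring, rpow_sub two_pos, rpow_one, rpow_natCast,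
          one_div_pow]
        ring

lemma regularCoeff_nonneg (s : ℝ) (n : ℕ) : 0 ≤ regularCoeff s n :=
  expCoeff_nonneg (regularPowerSum_nonneg s) n

lemma regularCoeff_le_of_le (hs : 1 ≤ s) (hst : s ≤ t) (n : ℕ) :
    regularCoeff t n ≤ regularCoeff s n :=
  expCoeff_mono (regularPowerSum_nonneg t) (regularPowerSum_le_of_le hs hst) n

lemma tendsto_regularCoeff (n : ℕ) :
    Tendsto (fun s => regularCoeff s n) (𝓝[>] 1) (𝓝 (regularCoeff 1 n)) :=
  tendsto_expCoeff tendsto_regularPowerSum n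

lemma summable_regularCoeff (hs : 1 ≤ s) : Summable (regularCoeff s) :=
  .of_nonneg_of_le (regularCoeff_nonneg s) (regularCoeff_le_of_le le_rfl hs)
    (summable_expCoeff (regularPowerSum_nonneg 1) summable_regularPowerSum_one)

lemma tsum_regularCoeff_pos (hs : 1 ≤ s) : 0 < ∑' n, regularCoeff s n :=
  (summable_regularCoeff hs).tsum_pos (regularCoeff_nonneg s) 0 (by simp [regularCoeff])

lemma tendsto_tsum_regularCoeff :
    Tendsto (fun s => ∑' n, regularCoeff s n) (𝓝[>] 1) (𝓝 (∑' n, regularCoeff 1 n)) := by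
  refine tendsto_tsum_of_dominated_convergence (summable_regularCoeff le_rfl)
    tendsto_regularCoeff ?_
  filter_upwards [self_mem_nhdsWithin] with s hs n
  rw [norm_of_nonneg (regularCoeff_nonneg s n)]
  exact regularCoeff_le_of_le le_rfl (le_of_lt hs) n

lemma Pk_eq_sum_antidiagonal (hs : 1 < s) (k : ℕ) :
    Pk k s = ∑ ij ∈ antidiagonal k,
      regularCoeff s ij.1 * (primeZeta s ^ ij.2 / ij.2.factorial) := by
  have hsplit : (fun i : ℕ => primeZeta ((i + 1) * s)) =
      regularPowerSum s + Pi.single 0 (primeZeta s) := by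
    funext i
    obtain rfl | hi := eq_or_ne i 0 <;> simp [regularPowerSum, *]
  have hexp : (fun k => Pk k s) = expCoeff fun i : ℕ => primeZeta ((i + 1) * s) :=
    eq_expCoeff (Pk_zero s) (succ_mul_Pk_succ hs)
  rw [congrFun hexp k, hsplit, expCoeff_add]
  simp only [expCoeff_single_zero, regularCoeff]

lemma tsum_one_div_nat_rpow_eq_mul_exp_primeZeta (hs : 1 < s) :
    ∑' n : ℕ, 1 / (n : ℝ) ^ s = (∑' n, regularCoeff s n) * exp (primeZeta s) := by
  have hexp : HasSum (fun j : ℕ => primeZeta s ^ j / j.factorial) (exp (primeZeta s)) :=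
    exp_eq_exp_ℝ ▸ NormedSpace.expSeries_div_hasSum_exp (primeZeta s)
  rw [← (hasSum_Pk hs).tsum_eq, ← hexp.tsum_eq,
    tsum_mul_tsum_eq_tsum_sum_antidiagonal_of_summable_norm (summable_regularCoeff hs.le).norm
      hexp.summable.norm]
  exact tsum_congr fun k => Pk_eq_sum_antidiagonal hs k

lemma tendsto_sub_one_mul_exp_primeZeta :
    Tendsto (fun s => (s - 1) * exp (primeZeta s)) (𝓝[>] 1) (𝓝 (∑' n, regularCoeff 1 n)⁻¹) := by
  rw [← one_div]
  refine (tendsto_sub_mul_tsum_nat_rpow.div tendsto_tsum_regularCoeff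
    (tsum_regularCoeff_pos le_rfl).ne').congr' ?_
  filter_upwards [self_mem_nhdsWithin] with s hs
  rw [Pi.div_apply, tsum_one_div_nat_rpow_eq_mul_exp_primeZeta hs, mul_left_comm,
    mul_div_cancel_left₀ _ (tsum_regularCoeff_pos (le_of_lt hs)).ne']

end RegularPart

section PkIntegral

lemma integrableOn_primeZeta_pow_div_factorial (j : ℕ) :
    IntegrableOn (fun s => primeZeta s ^ j / j.factorial) (Ioc 1 2) :=
  (integrableOn_pow_of_tendsto antitoneOn_primeZeta (fun s _ => primeZeta_nonneg s)
    tendsto_sub_one_mul_exp_primeZeta (inv_pos.2 (tsum_regularCoeff_pos le_rfl)) 2 j).div_const _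

lemma tendsto_setIntegral_primeZeta_pow_div_factorial :
    Tendsto (fun j : ℕ => ∫ s in Ioc (1 : ℝ) 2, primeZeta s ^ j / j.factorial) atTop
      (𝓝 (∑' n, regularCoeff 1 n)⁻¹) :=
  tendsto_setIntegral_pow_div_factorial antitoneOn_primeZeta (fun s _ => primeZeta_nonneg s)
    tendsto_sub_one_mul_exp_primeZeta (inv_pos.2 (tsum_regularCoeff_pos le_rfl)) one_lt_two

lemma continuous_two_rpow_sub_one : Continuous fun s : ℝ => (2 : ℝ) ^ (s - 1) :=
  (continuous_const_rpow two_ne_zero).comp (by fun_prop)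

lemma tendsto_two_rpow_sub_one : Tendsto (fun s : ℝ => (2 : ℝ) ^ (s - 1)) (𝓝[>] 1) (𝓝 1) := by
  simpa using (continuous_two_rpow_sub_one.tendsto 1).mono_left nhdsWithin_le_nhds

lemma norm_two_rpow_sub_one_mul_regularCoeff_le {s : ℝ} (hs : s ∈ Ioc 1 2) (i : ℕ) :
    ‖2 ^ (s - 1) * regularCoeff s i‖ ≤ 2 * regularCoeff 1 i := by
  rw [norm_of_nonneg (mul_nonneg (by positivity) (regularCoeff_nonneg s i))]
  gcongr
  · exact regularCoeff_nonneg s i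
  · simpa using rpow_le_rpow_of_exponent_le one_le_two (by linarith [hs.2] : s - 1 ≤ 1)
  · exact regularCoeff_le_of_le le_rfl hs.1.le i

lemma integrableOn_two_rpow_sub_one_mul_regularCoeff (i : ℕ) :
    IntegrableOn (fun s => (2 : ℝ) ^ (s - 1) * regularCoeff s i) (Set.Icc 1 2) := by
  have hanti : AntitoneOn (fun s => regularCoeff s i) (Set.Icc 1 2) :=
    fun s hs t _ hst => regularCoeff_le_of_le hs.1 hst i
  exact (hanti.integrableOn_isCompact isCompact_Icc).continuousOn_mul
    continuous_two_rpow_sub_one.continuousOn isCompact_Icc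

lemma tendsto_setIntegral_primeZeta_pow_mul_regularCoeff (i : ℕ) :
    Tendsto (fun j : ℕ => ∫ s in Ioc (1 : ℝ) 2,
        primeZeta s ^ j / j.factorial * (2 ^ (s - 1) * regularCoeff s i)) atTop
      (𝓝 ((∑' n, regularCoeff 1 n)⁻¹ * regularCoeff 1 i)) := by
  refine tendsto_setIntegral_mul_of_antitoneOn measurableSet_Ioc Set.Ioc_subset_Ioi_self one_lt_two
    subset_rfl (.of_forall fun j s _ => ?_) (.of_forall fun j => ?_) (fun s _ => ?_)
    (inv_pos.2 (tsum_regularCoeff_pos le_rfl)) tendsto_setIntegral_primeZeta_pow_div_factorial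
    ((integrableOn_two_rpow_sub_one_mul_regularCoeff i).mono_set Set.Ioc_subset_Icc_self) ?_
  · exact div_nonneg (pow_nonneg (primeZeta_nonneg s) j) (by positivity)
  · intro s hs t ht hst
    dsimp only
    gcongr
    exacts [primeZeta_nonneg t, antitoneOn_primeZeta hs ht hst]
  · exact FloorSemiring.tendsto_pow_div_factorial_atTop _
  · simpa using tendsto_two_rpow_sub_one.mul (tendsto_regularCoeff i)

lemma integrableOn_primeZeta_pow_mul_regularCoeff (i j : ℕ) :
    IntegrableOn
      (fun s => primeZeta s ^ j / j.factorial * (2 ^ (s - 1) * regularCoeff s i)) (Ioc 1 2) :=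
  (integrableOn_primeZeta_pow_div_factorial j).mul_bdd
    ((integrableOn_two_rpow_sub_one_mul_regularCoeff i).mono_set Set.Ioc_subset_Icc_self).1
    ((ae_restrict_mem measurableSet_Ioc).mono fun _ hs =>
      norm_two_rpow_sub_one_mul_regularCoeff_le hs i)

lemma norm_setIntegral_primeZeta_pow_mul_regularCoeff_le (i j : ℕ) :
    ‖∫ s in Ioc (1 : ℝ) 2, primeZeta s ^ j / j.factorial * (2 ^ (s - 1) * regularCoeff s i)‖ ≤
      (∫ s in Ioc (1 : ℝ) 2, primeZeta s ^ j / j.factorial) * (2 * regularCoeff 1 i) := by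
  rw [← integral_mul_const]
  refine norm_integral_le_of_norm_le
    ((integrableOn_primeZeta_pow_div_factorial j).mul_const _)
    ((ae_restrict_mem measurableSet_Ioc).mono fun s hs => ?_)
  rw [norm_mul, norm_of_nonneg (div_nonneg (pow_nonneg (primeZeta_nonneg s) j) (by positivity))]
  gcongr
  · exact div_nonneg (pow_nonneg (primeZeta_nonneg s) j) (by positivity)
  · exact norm_two_rpow_sub_one_mul_regularCoeff_le hs i

lemma tendsto_setIntegral_two_rpow_sub_one_mul_Pk :
    Tendsto (fun k => ∫ s in Ioc (1 : ℝ) 2, 2 ^ (s - 1) * Pk k s) atTop (𝓝 1) := by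
  obtain ⟨M, hM⟩ := tendsto_setIntegral_primeZeta_pow_div_factorial.bddAbove_range
  have hsum := tendsto_sum_antidiagonal
    ((summable_regularCoeff le_rfl).mul_left (M * 2))
    (b := fun i j => ∫ s in Ioc (1 : ℝ) 2,
      primeZeta s ^ j / j.factorial * (2 ^ (s - 1) * regularCoeff s i))
    (fun i j => (norm_setIntegral_primeZeta_pow_mul_regularCoeff_le i j).trans (by
      rw [mul_assoc]
      gcongr
      · exact mul_nonneg zero_le_two (regularCoeff_nonneg 1 i)
      · exact hM ⟨j, rfl⟩))
    tendsto_setIntegral_primeZeta_pow_mul_regularCoeff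
  rw [tsum_mul_left, inv_mul_cancel₀ (tsum_regularCoeff_pos le_rfl).ne'] at hsum
  refine hsum.congr fun k => ?_
  rw [← integral_finsetSum _ fun ij _ =>
    (integrableOn_primeZeta_pow_mul_regularCoeff ij.1 ij.2).integrable]
  refine setIntegral_congr_fun measurableSet_Ioc fun s hs => ?_
  rw [Pk_eq_sum_antidiagonal hs.1, Finset.mul_sum]
  exact Finset.sum_congr rfl fun ij _ => by ring

lemma tendsto_setIntegral_Pk_mul {w : ℝ → ℝ} {l : ℝ}
    (hw : IntegrableOn (fun s => 2 ^ (1 - s) * w s) (Ioi 1)) (hwl : Tendsto w (𝓝[>] 1) (𝓝 l)) :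
    Tendsto (fun k => ∫ s in Ioi 1, Pk k s * w s) atTop (𝓝 l) := by
  have hpeak : Tendsto (fun k => ∫ s in Ioi 1, 2 ^ (s - 1) * Pk k s * (2 ^ (1 - s) * w s)) atTop
      (𝓝 (1 * l)) := by
    refine tendsto_setIntegral_mul_of_antitoneOn measurableSet_Ioi subset_rfl one_lt_two
      Set.Ioc_subset_Ioi_self (.of_forall fun k s _ => ?_) ?_ (fun s hs => ?_) one_pos
      tendsto_setIntegral_two_rpow_sub_one_mul_Pk hw ?_
    · exact mul_nonneg (by positivity) (Pk_nonneg k s)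
    · filter_upwards [eventually_ne_atTop 0] with k hk
      exact antitoneOn_two_rpow_sub_one_mul_Pk hk
    · simpa using (tendsto_Pk_zero hs).const_mul _
    · simpa [← rpow_neg] using (tendsto_two_rpow_sub_one.inv₀ one_ne_zero).mul hwl
  rw [one_mul] at hpeak
  refine hpeak.congr fun k => setIntegral_congr_fun measurableSet_Ioi fun s _ => ?_
  calc (2 : ℝ) ^ (s - 1) * Pk k s * (2 ^ (1 - s) * w s)
      = 2 ^ (s - 1) * 2 ^ (1 - s) * (Pk k s * w s) := by ring
    _ = Pk k s * w s := by rw [← rpow_add two_pos]; simp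

end PkIntegral

section TransSum

variable {A : Set ℕ} {x h a b : ℝ}

lemma rpow_neg_mul_exp_one_sub_mul (hx : 0 < x) (s h : ℝ) :
    x ^ (-s) * exp ((1 - s) * h) = exp h * exp (-(log x + h) * s) := by
  rw [rpow_def_of_pos hx, ← exp_add, ← exp_add]
  ring_nf

lemma integrableOn_rpow_neg_mul_exp_s3 (hx : 1 < x) (hh : 0 ≤ h) :
    IntegrableOn (fun s => x ^ (-s) * exp ((1 - s) * h)) (Ioi 1) := by
  simp only [rpow_neg_mul_exp_one_sub_mul (one_pos.trans hx)]
  exact (integrableOn_exp_mul_Ioi (by linarith [log_pos hx]) 1).const_mul _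

lemma setIntegral_rpow_neg_mul_exp (hx : 1 < x) (hh : 0 ≤ h) :
    ∫ s in Ioi 1, x ^ (-s) * exp ((1 - s) * h) = 1 / (x * (log x + h)) := by
  have hx0 : 0 < x := one_pos.trans hx
  have hlog : 0 < log x + h := by linarith [log_pos hx]
  have hexp : exp (-(log x + h) * 1) = (exp h)⁻¹ * x⁻¹ := by
    rw [mul_one, neg_add, exp_add, exp_neg, exp_neg, exp_log hx0, mul_comm]
  simp only [rpow_neg_mul_exp_one_sub_mul hx0]
  rw [integral_const_mul, integral_exp_mul_Ioi (by linarith), hexp]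
  field_simp

lemma transSum_eq_setIntegral (hA : ∀ n ∈ A, 2 ≤ n) (hh : 0 ≤ h) :
    transSum A h = ∫ s in Ioi 1, (∑' n : A, (n.1 : ℝ) ^ (-s)) * exp ((1 - s) * h) := by
  have hone_lt (n : A) : (1 : ℝ) < n.1 := by exact_mod_cast hA n n.2
  simp only [← tsum_mul_right]
  rw [integral_tsum_of_nonneg (fun n => integrableOn_rpow_neg_mul_exp_s3 (hone_lt n) hh)
    (fun n => .of_forall fun s => by dsimp only [Pi.zero_apply]; positivity)
    ((ae_restrict_mem measurableSet_Ioi).mono fun s hs =>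
      (summable_subtype_rpow_neg A hs).mul_right _)]
  exact tsum_congr fun n => (setIntegral_rpow_neg_mul_exp (hone_lt n) hh).symm

lemma tendsto_transSum_almostPrimes (hh : 0 ≤ h) :
    Tendsto (fun k => transSum (almostPrimes k) h) atTop (𝓝 1) := by
  have hint : IntegrableOn (fun s => 2 ^ (1 - s) * exp ((1 - s) * h)) (Ioi 1) := by
    refine IntegrableOn.congr_fun ((integrableOn_rpow_neg_mul_exp_s3 one_lt_two hh).const_mul 2)
      (fun s _ => ?_) measurableSet_Ioi
    rw [sub_eq_add_neg 1 s, rpow_add two_pos, rpow_one, mul_assoc]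
  have hlim : Tendsto (fun s => exp ((1 - s) * h)) (𝓝[>] 1) (𝓝 1) := by
    have hcont : Continuous fun s => exp ((1 - s) * h) := by fun_prop
    simpa using (hcont.tendsto 1).mono_left nhdsWithin_le_nhds
  refine (tendsto_setIntegral_Pk_mul hint hlim).congr' ?_
  filter_upwards [eventually_ne_atTop 0] with k hk
  exact (transSum_eq_setIntegral (fun _ => two_le_of_mem_almostPrimes hk) hh).symm

lemma summable_one_div_mul_log_add_s3 (hA : ∀ n ∈ A, 2 ≤ n) (ha : 0 ≤ a) (hb : 0 ≤ b)
    (hs : Summable fun n : A => 1 / ((n.1 : ℝ) * (log n.1 + a))) :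
    Summable fun n : A => 1 / ((n.1 : ℝ) * (log n.1 + b)) := by
  have hlog_two : 0 < log 2 := log_pos one_lt_two
  refine (hs.mul_left (1 + a / log 2)).of_nonneg_of_le (fun n => ?_) fun n => ?_
  · have := log_natCast_nonneg n.1
    positivity
  have hn : (2 : ℝ) ≤ n.1 := by exact_mod_cast hA n n.2
  have hlog : log 2 ≤ log n.1 := log_le_log two_pos hn
  have hcompare : log n.1 + a ≤ (1 + a / log 2) * (log n.1 + b) :=
    calc log n.1 + a = log n.1 + a / log 2 * log 2 := by field_simp
      _ ≤ log n.1 + a / log 2 * log n.1 := by gcongr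
      _ = (1 + a / log 2) * log n.1 := by ring
      _ ≤ (1 + a / log 2) * (log n.1 + b) := by gcongr; linarith
  have hlog_pos : 0 < log n.1 := hlog_two.trans_le hlog
  have : (0 : ℝ) < n.1 := two_pos.trans_le hn
  rw [mul_one_div, div_le_div_iff₀ (by positivity) (by positivity), one_mul, mul_left_comm]
  gcongr

lemma strictAntiOn_transSum (hA : ∀ n ∈ A, 2 ≤ n) (hne : A.Nonempty) (ha : 0 ≤ a)
    (hs : Summable fun n : A => 1 / ((n.1 : ℝ) * (log n.1 + a))) :
    StrictAntiOn (transSum A) (Set.Ici 0) := by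
  intro b hb c hc hbc
  obtain ⟨m, hm⟩ := hne
  have hlt (n : A) : 1 / ((n.1 : ℝ) * (log n.1 + c)) < 1 / ((n.1 : ℝ) * (log n.1 + b)) := by
    have hn : (1 : ℝ) < n.1 := by exact_mod_cast hA n n.2
    have hlog : 0 < log n.1 + b := add_pos_of_pos_of_nonneg (log_pos hn) hb
    gcongr
  exact Summable.tsum_lt_tsum (i := ⟨m, hm⟩) (fun n => (hlt n).le) (hlt _)
    (summable_one_div_mul_log_add_s3 hA ha hc hs) (summable_one_div_mul_log_add_s3 hA ha hb hs)

end TransSum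

/-- Let `hinf` be the unique real `t ≥ 0` with `∫₁^∞ P(s) e^{(1−s)t} ds = 1`.
If `h > hinf` then `f(N₁,h) < f(N_k,h)` for all sufficiently large `k`;
if `0 ≤ h < hinf` then `f(N₁,h) > f(N_k,h)` for all sufficiently large `k`. -/
theorem stmt_3 (hinf : ℝ)
    (hhinf : ∀ t : ℝ,
      (0 ≤ t ∧ (∫ s in Set.Ioi (1:ℝ), primeZeta s * Real.exp ((1 - s) * t)) = 1) ↔ t = hinf) :
    (∀ h : ℝ, hinf < h → ∃ K : ℕ, ∀ k : ℕ, K ≤ k →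
      transSum (almostPrimes 1) h < transSum (almostPrimes k) h) ∧
    (∀ h : ℝ, 0 ≤ h → h < hinf → ∃ K : ℕ, ∀ k : ℕ, K ≤ k →
      transSum (almostPrimes 1) h > transSum (almostPrimes k) h) := by
  obtain ⟨hinf_nonneg, hint⟩ := (hhinf hinf).2 rfl
  have htwo_le : ∀ n ∈ almostPrimes 1, 2 ≤ n := fun _ => two_le_of_mem_almostPrimes one_ne_zero
  have heq_one : transSum (almostPrimes 1) hinf = 1 := by
    rw [← Pk_one] at hint
    exact (transSum_eq_setIntegral htwo_le hinf_nonneg).trans hint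
  have hanti : StrictAntiOn (transSum (almostPrimes 1)) (Set.Ici 0) := by
    refine strictAntiOn_transSum htwo_le ⟨2, by simp [almostPrimes_one, Nat.prime_two]⟩
      hinf_nonneg (not_imp_comm.1 tsum_eq_zero_of_not_summable ?_)
    exact heq_one.trans_ne one_ne_zero
  refine ⟨fun h hlt => ?_, fun h hh hlt => ?_⟩
  · have hh : 0 ≤ h := hinf_nonneg.trans hlt.le
    exact eventually_atTop.1 ((tendsto_transSum_almostPrimes hh).eventually_const_lt
      ((hanti hinf_nonneg hh hlt).trans_eq heq_one))
  · exact eventually_atTop.1 ((tendsto_transSum_almostPrimes hh).eventually_lt_const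
      (heq_one.symm.trans_lt (hanti hh hinf_nonneg hlt)))
end

section
/- For every integer k ≥ 1 and every real s > 1, P_k(s) = (1/k) ∑_{j=1}^{k} P_{k−j}(s) P(js), where P_0(s) = 1 by convention and P = P₁ is the prime zeta function. -/
open MeasureTheory Real

/-!
If `f` is completely multiplicative, the product of `∑_{m ∈ N_{k-j}} f m` and `∑_p f(p)^j` is a
sum over pairs `(m, p)`. Grouped by `n = p ^ j * m ∈ N_k`, it is the sum of `f n` weighted by the
number of primes `p` with `p ^ j ∣ n`. Summed over `1 ≤ j ≤ k`, these weights count every prime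
factor of `n` with its multiplicity, so they add up to `Ω n = k`.
For `P_k(s)`, take `f n = n ^ (-s)`.
-/

open ArithmeticFunction.Omega Finset

lemma factorization_le_cardFactors (n p : ℕ) : n.factorization p ≤ Ω n := by
  rw [← Nat.primeFactorsList_count_eq, ArithmeticFunction.cardFactors_apply]
  exact List.count_le_length

lemma card_filter_Icc_pow_dvd {n p k : ℕ} (hn : n ≠ 0) (hp : p.Prime)
    (hk : n.factorization p ≤ k) : #{j ∈ Icc 1 k | p ^ j ∣ n} = n.factorization p := by
  have h : {j ∈ Icc 1 k | p ^ j ∣ n} = Icc 1 (n.factorization p) := by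
    ext j
    simp only [mem_filter, mem_Icc, hp.pow_dvd_iff_le_factorization hn]
    lia
  rw [h, Nat.card_Icc, Nat.add_sub_cancel]

lemma sum_Icc_card_filter_primeFactors_pow_dvd {n k : ℕ} (hn : n ≠ 0) (hk : Ω n ≤ k) :
    ∑ j ∈ Icc 1 k, #{p ∈ n.primeFactors | p ^ j ∣ n} = Ω n := calc
  _ = ∑ p ∈ n.primeFactors, #{j ∈ Icc 1 k | p ^ j ∣ n} :=
    sum_card_bipartiteAbove_eq_sum_card_bipartiteBelow fun j p ↦ p ^ j ∣ n
  _ = ∑ p ∈ n.primeFactors, n.factorization p :=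
    sum_congr rfl fun p hp ↦ card_filter_Icc_pow_dvd hn (Nat.prime_of_mem_primeFactors hp)
      ((factorization_le_cardFactors n p).trans hk)
  _ = Ω n := ArithmeticFunction.cardFactors_eq_sum_factorization.symm

lemma mem_almostPrimes_iff {k n : ℕ} : n ∈ almostPrimes k ↔ n ≠ 0 ∧ Ω n = k := by
  rw [almostPrimes, Set.mem_ofPred_eq, Nat.pos_iff_ne_zero, ArithmeticFunction.cardFactors_apply]

lemma mem_almostPrimes_zero_iff {n : ℕ} : n ∈ almostPrimes 0 ↔ n = 1 := by
  rw [mem_almostPrimes_iff, ArithmeticFunction.cardFactors_eq_zero_iff_eq_zero_or_one]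
  lia

lemma prime_pow_mul_mem_almostPrimes_iff {p : ℕ} (hp : p.Prime) {i j m : ℕ} :
    p ^ j * m ∈ almostPrimes (i + j) ↔ m ∈ almostPrimes i := by
  have hpj : p ^ j ≠ 0 := pow_ne_zero j hp.ne_zero
  rcases eq_or_ne m 0 with rfl | hm
  · simp [mem_almostPrimes_iff]
  · rw [mem_almostPrimes_iff, mem_almostPrimes_iff, ArithmeticFunction.cardFactors_mul hpj hm,
      ArithmeticFunction.cardFactors_apply_prime_pow hp, add_comm, Nat.add_right_cancel_iff]
    simp only [ne_eq, mul_eq_zero, hpj, hm, or_self, not_false_eq_true, true_and]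

lemma prime_pow_mem_almostPrimes {p : ℕ} (hp : p.Prime) (j : ℕ) : p ^ j ∈ almostPrimes j :=
  mem_almostPrimes_iff.2
    ⟨pow_ne_zero j hp.ne_zero, ArithmeticFunction.cardFactors_apply_prime_pow hp⟩

lemma exists_prime_mul_of_mem_almostPrimes_succ {k n : ℕ} (hn : n ∈ almostPrimes (k + 1)) :
    ∃ p m : ℕ, p.Prime ∧ m ∈ almostPrimes k ∧ p * m = n := by
  have hn1 : n ≠ 1 := by
    rintro rfl
    simp [mem_almostPrimes_iff] at hn
  obtain ⟨p, hp, m, rfl⟩ := Nat.exists_prime_and_dvd hn1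
  rw [← pow_one p, prime_pow_mul_mem_almostPrimes_iff hp] at hn
  exact ⟨p, m, hp, hn, rfl⟩

/-- The map `(m, p) ↦ (p ^ j * m, p)` from pairs of an `i`-almost prime and a prime to pairs of an
`(i + j)`-almost prime `n` and a prime `p` with `p ^ j ∣ n`. The range of `p` is encoded as a finset
of prime factors of `n`, so that sums over it are finite. -/
def almostPrimesMulPrimePow (i : ℕ) {j : ℕ} (hj : j ≠ 0) (x : almostPrimes i × Nat.Primes) :
    Σ n : almostPrimes (i + j), {p ∈ (n : ℕ).primeFactors | p ^ j ∣ (n : ℕ)} :=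
  have hn := (prime_pow_mul_mem_almostPrimes_iff x.2.2).2 x.1.2
  ⟨⟨x.2 ^ j * x.1, hn⟩, x.2, mem_filter.2
    ⟨Nat.mem_primeFactors.2 ⟨x.2.2, (dvd_pow_self _ hj).mul_right _, hn.1.ne'⟩, dvd_mul_right _ _⟩⟩

lemma almostPrimesMulPrimePow_bijective (i : ℕ) {j : ℕ} (hj : j ≠ 0) :
    (almostPrimesMulPrimePow i hj).Bijective := by
  constructor
  · rintro ⟨⟨m, hm⟩, p, hp⟩ ⟨⟨m', hm'⟩, p', hp'⟩ h
    have hpp : p = p' := congrArg (fun y ↦ (y.2 : ℕ)) h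
    have hmm : p ^ j * m = p' ^ j * m' := congrArg (fun y ↦ (y.1 : ℕ)) h
    subst hpp
    obtain rfl := Nat.eq_of_mul_eq_mul_left (pow_pos hp.pos j) hmm
    rfl
  · rintro ⟨⟨n, hn⟩, p, hp⟩
    obtain ⟨hpn, m, rfl⟩ := mem_filter.1 hp
    have hp' := Nat.prime_of_mem_primeFactors hpn
    exact ⟨(⟨m, (prime_pow_mul_mem_almostPrimes_iff hp').1 hn⟩, ⟨p, hp'⟩), rfl⟩

section CompletelyMultiplicative

variable {R : Type*} [NormedCommRing R] {f : ℕ →* R}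

lemma summable_norm_almostPrimes (hf : Summable fun p : Nat.Primes ↦ ‖f p‖) (k : ℕ) :
    Summable fun n : almostPrimes k ↦ ‖f n‖ := by
  induction k with
  | zero =>
    have : Subsingleton (almostPrimes 0) := (Set.subsingleton_coe _).2 fun a ha b hb ↦
      (mem_almostPrimes_zero_iff.1 ha).trans (mem_almostPrimes_zero_iff.1 hb).symm
    exact Summable.of_finite
  | succ k ih =>
    choose p m hp hm hpm using fun n : almostPrimes (k + 1) ↦
      exists_prime_mul_of_mem_almostPrimes_succ n.2
    let g (n : almostPrimes (k + 1)) : Nat.Primes × almostPrimes k := (⟨p n, hp n⟩, ⟨m n, hm n⟩)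
    have hg : g.Injective := by
      intro a b hab
      obtain ⟨hpab, hmab⟩ : p a = p b ∧ m a = m b :=
        ⟨congrArg (fun x ↦ (x.1 : ℕ)) hab, congrArg (fun x ↦ (x.2 : ℕ)) hab⟩
      ext
      rw [← hpm a, ← hpm b, hpab, hmab]
    refine .of_nonneg_of_le (fun n ↦ norm_nonneg _) (fun n ↦ ?_)
      ((hf.mul_of_nonneg ih (fun _ ↦ norm_nonneg _) fun _ ↦ norm_nonneg _).comp_injective hg)
    rw [← hpm n, map_mul]
    exact norm_mul_le _ _

lemma summable_norm_primes_pow (hf : Summable fun p : Nat.Primes ↦ ‖f p‖) {j : ℕ} (hj : j ≠ 0) :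
    Summable fun p : Nat.Primes ↦ ‖f p ^ j‖ := by
  let g (p : Nat.Primes) : almostPrimes j := ⟨p ^ j, prime_pow_mem_almostPrimes p.2 j⟩
  have hg : g.Injective := fun p q hpq ↦
    Subtype.ext (Nat.pow_left_injective hj (congrArg Subtype.val hpq))
  simpa only [Function.comp_def, g, map_pow] using
    (summable_norm_almostPrimes hf j).comp_injective hg

variable [CompleteSpace R]

lemma hasSum_card_pow_dvd_mul_almostPrimes (hf : Summable fun p : Nat.Primes ↦ ‖f p‖) (i : ℕ)
    {j : ℕ} (hj : j ≠ 0) :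
    HasSum (fun n : almostPrimes (i + j) ↦
        (#{p ∈ (n : ℕ).primeFactors | p ^ j ∣ (n : ℕ)} : R) * f n)
      ((∑' m : almostPrimes i, f m) * ∑' p : Nat.Primes, f p ^ j) := by
  have hm := summable_norm_almostPrimes hf i
  have hp := summable_norm_primes_pow hf hj
  have hprod : HasSum (fun x : almostPrimes i × Nat.Primes ↦ f x.1 * f x.2 ^ j)
      ((∑' m : almostPrimes i, f m) * ∑' p : Nat.Primes, f p ^ j) := by
    rw [tsum_mul_tsum_of_summable_norm hm hp]
    exact (summable_mul_of_summable_norm hm hp).hasSum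
  have hsigma : HasSum (fun y : Σ n : almostPrimes (i + j),
      {p ∈ (n : ℕ).primeFactors | p ^ j ∣ (n : ℕ)} ↦ f y.1)
      ((∑' m : almostPrimes i, f m) * ∑' p : Nat.Primes, f p ^ j) := by
    rw [← (Equiv.ofBijective _ (almostPrimesMulPrimePow_bijective i hj)).hasSum_iff]
    convert hprod using 2 with x
    change f (x.2 ^ j * x.1) = f x.1 * f x.2 ^ j
    rw [map_mul, map_pow, mul_comm]
  refine hsigma.sigma fun n ↦ ?_
  have hfiber := hasSum_fintype
    fun _ : {p ∈ (n : ℕ).primeFactors | p ^ j ∣ (n : ℕ)} ↦ f n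
  rwa [sum_const, card_univ, Fintype.card_coe, nsmul_eq_mul] at hfiber

theorem stmt_6_general (hf : Summable fun p : Nat.Primes ↦ ‖f p‖) (k : ℕ) :
    (k : R) * ∑' n : almostPrimes k, f n =
      ∑ j ∈ Icc 1 k, (∑' m : almostPrimes (k - j), f m) * ∑' p : Nat.Primes, f p ^ j := by
  have hprod (j : ℕ) (hj : j ∈ Icc 1 k) :
      HasSum (fun n : almostPrimes k ↦
          (#{p ∈ (n : ℕ).primeFactors | p ^ j ∣ (n : ℕ)} : R) * f n)
        ((∑' m : almostPrimes (k - j), f m) * ∑' p : Nat.Primes, f p ^ j) := by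
    obtain ⟨hj, hjk⟩ := mem_Icc.1 hj
    have h := hasSum_card_pow_dvd_mul_almostPrimes hf (k - j) (Nat.one_le_iff_ne_zero.1 hj)
    rwa [Nat.sub_add_cancel hjk] at h
  have hweight (n : almostPrimes k) :
      ∑ j ∈ Icc 1 k, (#{p ∈ (n : ℕ).primeFactors | p ^ j ∣ (n : ℕ)} : R) * f n = k * f n := by
    obtain ⟨hn, hk⟩ := mem_almostPrimes_iff.1 n.2
    rw [← sum_mul, ← Nat.cast_sum, sum_Icc_card_filter_primeFactors_pow_dvd hn hk.le, hk]
  have hsum := hasSum_sum hprod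
  simp only [hweight] at hsum
  exact ((summable_norm_almostPrimes hf k).of_norm.hasSum.mul_left _).unique hsum

end CompletelyMultiplicative

/-- The completely multiplicative function `n ↦ n ^ (-s)`, the summand of `primeZeta` and `Pk`. -/
noncomputable def rpowNegHom (s : ℝ) : ℕ →* ℝ where
  toFun n := (n : ℝ) ^ (-s)
  map_one' := by rw [Nat.cast_one, one_rpow]
  map_mul' m n := by rw [Nat.cast_mul, mul_rpow m.cast_nonneg n.cast_nonneg]

lemma summable_norm_rpowNegHom_primes {s : ℝ} (hs : 1 < s) :
    Summable fun p : Nat.Primes ↦ ‖rpowNegHom s p‖ :=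
  (Nat.Primes.summable_rpow.2 (neg_lt_neg hs)).norm

lemma Pk_eq_tsum_rpowNegHom (k : ℕ) (s : ℝ) :
    Pk k s = ∑' n : almostPrimes k, rpowNegHom s n := rfl

lemma primeZeta_natCast_mul (j : ℕ) (s : ℝ) :
    primeZeta (j * s) = ∑' p : Nat.Primes, rpowNegHom s p ^ j := by
  refine tsum_congr fun p ↦ ?_
  change (p : ℝ) ^ (-(j * s)) = ((p : ℝ) ^ (-s)) ^ j
  rw [← rpow_mul_natCast (Nat.cast_nonneg _), neg_mul, mul_comm s]

/-- For every `k ≥ 1` and real `s > 1`,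
`P_k(s) = (1/k) ∑_{j=1}^k P_{k−j}(s) P(js)` (with `P_0 = 1`). -/
theorem stmt_6 (k : ℕ) (hk : 1 ≤ k) (s : ℝ) (hs : 1 < s) :
    Pk k s = (1 / (k : ℝ)) * ∑ j ∈ Finset.Icc 1 k, Pk (k - j) s * primeZeta ((j : ℝ) * s) := by
  rw [one_div, eq_inv_mul_iff_mul_eq₀ (by positivity)]
  simpa only [Pk_eq_tsum_rpowNegHom, primeZeta_natCast_mul] using
    stmt_6_general (summable_norm_rpowNegHom_primes hs) k
end
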